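/- Let K be a number field of degree κ, α_1,…,α_m ∈ Z_K pairwise distinct and nonzero, and let H satisfy log H ≥ s·e^s where s = max{e^κ + 1, c_1 + 1, (m+3)^2 + 1}. Suppose λ_0,λ_1,…,λ_m ∈ Z_K are such that at least one of them is non-zero and Π_{v∈V_∞} max_{0≤i≤m} ‖λ_i‖_v ≤ H. Then there exists a prime p in the open interval ( log(log H / log log H), 17m·log H / log log H ) and a place v' of K lying over p such that ‖λ_0 + λ_1 F_{v'}(α_1) + … + λ_m F_{v'}(α_m)‖_{v'} > H^{−(m+1) − 114 m^2 · (log log log H)/(log log H)}. -/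

import Mathlib

open NumberField IsDedekindDomain Nat Finset Filter

/-- The paper's normalised absolute value on the `v`-adic completion of a number
field `K` of degree `κ`: `‖x‖_v = |x|_v ^ (κ_v/κ) = (N(v)^(−ord_v x))^(1/κ)`. -/
noncomputable def compNorm (K : Type*) [Field K] [NumberField K]
    (v : HeightOneSpectrum (𝓞 K)) (x : v.adicCompletion K) : ℝ :=
  ((WithZeroMulInt.toNNReal
      (by
        simp only [ne_eq, Nat.cast_eq_zero]
        exact Ideal.absNorm_ne_zero_iff_mem_nonZeroDivisors.mpr
          (mem_nonZeroDivisors_of_ne_zero v.ne_bot)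
        : (Ideal.absNorm v.asIdeal : NNReal) ≠ 0)
      (Valued.v x) : NNReal) : ℝ) ^ ((Module.finrank ℚ K : ℝ))⁻¹

/-- The paper's normalised absolute value attached to an Archimedean place `w` of a
number field `K` of degree `κ`:  `‖x‖_w = (w x) ^ (mult w / κ)`. -/
noncomputable def infNorm (K : Type*) [Field K] [NumberField K]
    (w : InfinitePlace K) (x : K) : ℝ :=
  (w x) ^ ((w.mult : ℝ) / (Module.finrank ℚ K : ℝ))

/-- Euler's factorial series `F_v(α) = ∑ₙ n! αⁿ`, summed in the `v`-adic completion
of the number field `K`. -/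
noncomputable def eulerF (K : Type*) [Field K] [NumberField K]
    (v : HeightOneSpectrum (𝓞 K)) (α : 𝓞 K) : v.adicCompletion K :=
  ∑' n : ℕ, ((n ! : ℕ) : v.adicCompletion K) *
    (algebraMap K (v.adicCompletion K) (α : K)) ^ n

/-!
For `G = ∏ (X - α_j) ^ e_j` with exponents `e_j ∈ {l, l + 1}`, one polynomial `padeDenom G`
approximates all the series `F(α_j)` at once (Padé approximation of the second type). The `m + 1`
choices in which at most one exponent is `l` give a square matrix of approximants whose
determinant is a nonzero monomial, so some row, evaluated at `1`, pairs with the `λ_i` to a nonzero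
integer `W` of `K`.

Suppose the linear form were tiny at every place above every prime in `(n, m (l + 1)]`. Then `W`
would be divisible by the part of `(deg G)! l!` free of primes `≤ n`, and the product formula would
bound that part by `∏ ‖W‖_w ≤ (m + 1) (deg G)! H c₁ ^ (l + 1)`. By Legendre and Mertens the primes
`≤ n` contribute only about `(deg G + l) log n` to `log ((deg G)! l!)`, so `log l!` would be at most
about `log H + (deg G + l) log n`. This fails for `n = ⌊log (log H / log log H)⌋` and `l` slightly
larger than `log H / log log H`.
-/

section PadeApproximation

open Polynomial
open scoped PowerSeries

variable {R : Type*} [CommRing R]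

/-- Euler's factorial series `∑ n! aⁿ Xⁿ` as a formal power series. -/
noncomputable def eulerSeries (a : R) : R⟦X⟧ :=
  PowerSeries.mk fun n => (n ! : R) * a ^ n

/-- The weight `G_i E! / i!`, where `E = deg G`, of the term `i` in the Padé approximants attached
to the polynomial `G`. -/
noncomputable def padeCoeff (G : R[X]) (i : ℕ) : R :=
  G.coeff i * (G.natDegree.descFactorial (G.natDegree - i) : ℕ)

/-- The common denominator of the Padé approximants attached to `G` to all the series
`eulerSeries a`; the order of contact at `eulerSeries a` is governed by the multiplicity of the
root `a` of `G`. -/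
noncomputable def padeDenom (G : R[X]) : R[X] :=
  ∑ i ∈ range (G.natDegree + 1), C (padeCoeff G i) * X ^ (G.natDegree - i)

/-- The numerator of the Padé approximant attached to `G` to the series `eulerSeries a`. -/
noncomputable def padeNum (G : R[X]) (a : R) : R[X] :=
  ∑ i ∈ range (G.natDegree + 1), C (padeCoeff G i) *
    X ^ (G.natDegree - i) * (eulerSeries a).trunc i

/-- The coefficient of order `deg G + k` in the remainder
`padeDenom G * eulerSeries a - padeNum G a`. -/
noncomputable def padeRem (G : R[X]) (a : R) (k : ℕ) : R :=
  ∑ i ∈ range (G.natDegree + 1), padeCoeff G i * (((i + k)! : R) * a ^ (i + k))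

lemma coeff_eulerSeries (a : R) (n : ℕ) : (eulerSeries a).coeff n = (n ! : R) * a ^ n :=
  PowerSeries.coeff_mk _ _

lemma descFactorial_sub_mul_factorial_add {E i : ℕ} (hi : i ≤ E) (k : ℕ) :
    E.descFactorial (E - i) * (i + k)! = E ! * k ! * (i + k).choose k := by
  have h₁ := Nat.factorial_mul_descFactorial (Nat.sub_le E i)
  have h₂ := Nat.add_choose_mul_factorial_mul_factorial i k
  rw [Nat.sub_sub_self hi] at h₁
  rw [← h₁, ← h₂]
  ac_rfl

lemma padeRem_eq_taylor_coeff (G : R[X]) (a : R) (k : ℕ) :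
    padeRem G a k =
      (G.natDegree ! : R) * k ! * a ^ k *
        (taylor a (X ^ k * G)).coeff k := by
  have hdeg : (hasseDeriv k (X ^ k * G)).natDegree < G.natDegree + 1 := by
    have h₁ := natDegree_hasseDeriv_le (X ^ k * G) k
    have h₂ := natDegree_mul_le (p := (X ^ k : R[X])) (q := G)
    have h₃ := natDegree_X_pow_le (R := R) k
    omega
  rw [taylor_coeff, eval_eq_sum_range' hdeg, padeRem, Finset.mul_sum]
  refine Finset.sum_congr rfl fun i hi => ?_
  have hcast := congrArg (Nat.cast (R := R))
    (descFactorial_sub_mul_factorial_add (Nat.lt_succ_iff.mp (Finset.mem_range.mp hi)) k)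
  push_cast at hcast
  rw [hasseDeriv_coeff, coeff_X_pow_mul, padeCoeff, pow_add]
  linear_combination (G.coeff i * a ^ i * a ^ k) * hcast

lemma padeRem_eq_of_eq_mul {G Q : R[X]} {a : R} {e : ℕ}
    (hG : G = (X - C a) ^ e * Q) (k : ℕ) :
    padeRem G a k =
      (G.natDegree ! : R) * k ! * a ^ k *
        (X ^ e * taylor a (X ^ k * Q)).coeff k := by
  have htaylor : taylor a (X ^ k * G) = X ^ e * taylor a (X ^ k * Q) := by
    rw [hG, mul_left_comm, taylor_mul, taylor_pow]
    simp
  rw [padeRem_eq_taylor_coeff, htaylor]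

lemma padeRem_eq_zero {G : R[X]} {a : R} {e k : ℕ}
    (hG : (X - C a) ^ e ∣ G) (hk : k < e) : padeRem G a k = 0 := by
  obtain ⟨Q, hQ⟩ := hG
  rw [padeRem_eq_of_eq_mul hQ, coeff_X_pow_mul', if_neg hk.not_ge, mul_zero]

lemma padeRem_self {G Q : R[X]} {a : R} {e : ℕ}
    (hG : G = (X - C a) ^ e * Q) :
    padeRem G a e = (G.natDegree ! : R) * e ! * a ^ e * (a ^ e * Q.eval a) := by
  rw [padeRem_eq_of_eq_mul hG, coeff_X_pow_mul', if_pos le_rfl, Nat.sub_self, taylor_coeff_zero]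
  simp

lemma factorial_mul_factorial_dvd_padeRem {G : R[X]} {a : R} {l : ℕ}
    (hG : (X - C a) ^ l ∣ G) (k : ℕ) :
    ((G.natDegree ! * l ! : ℕ) : R) ∣ padeRem G a k := by
  rcases lt_or_ge k l with hk | hk
  · rw [padeRem_eq_zero hG hk]
    exact dvd_zero _
  · rw [padeRem_eq_taylor_coeff, mul_assoc]
    push_cast
    exact (mul_dvd_mul_left _ (Nat.cast_dvd_cast (Nat.factorial_dvd_factorial hk))).mul_right _

lemma mk_padeRem_eq_sum (G : R[X]) (a : R) :
    PowerSeries.mk (padeRem G a) = ∑ i ∈ range (G.natDegree + 1), PowerSeries.C (padeCoeff G i) *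
      PowerSeries.mk fun k => (eulerSeries a).coeff (i + k) := by
  ext k
  simp [padeRem, coeff_eulerSeries]

lemma padeDenom_mul_eulerSeries (G : R[X]) (a : R) :
    (padeDenom G : R⟦X⟧) * eulerSeries a =
      (padeNum G a : R⟦X⟧) + PowerSeries.X ^ G.natDegree * PowerSeries.mk (padeRem G a) := by
  have hsum (f : ℕ → R[X]) (s : Finset ℕ) :
      ((∑ i ∈ s, f i : R[X]) : R⟦X⟧) = ∑ i ∈ s, (f i : R⟦X⟧) :=
    map_sum (coeToPowerSeries.ringHom (R := R)) f s
  rw [mk_padeRem_eq_sum, padeDenom, padeNum, hsum, hsum, Finset.sum_mul, Finset.mul_sum,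
    ← Finset.sum_add_distrib]
  refine Finset.sum_congr rfl fun i hi => ?_
  have hX : (PowerSeries.X : R⟦X⟧) ^ G.natDegree =
      PowerSeries.X ^ (G.natDegree - i) * PowerSeries.X ^ i := by
    rw [← pow_add, Nat.sub_add_cancel (Nat.lt_succ_iff.mp (Finset.mem_range.mp hi))]
  have hsplit := PowerSeries.eq_X_pow_mul_shift_add_trunc i (eulerSeries a)
  simp only [add_comm _ i] at hsplit
  simp only [Polynomial.coe_mul, Polynomial.coe_pow, Polynomial.coe_C, Polynomial.coe_X, hX]
  linear_combination
    (PowerSeries.C (padeCoeff G i) * PowerSeries.X ^ (G.natDegree - i)) * hsplit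

lemma padeDenom_mul_eulerSeries_of_dvd {G : R[X]} {a : R} {k : ℕ}
    (hG : (X - C a) ^ k ∣ G) :
    (padeDenom G : R⟦X⟧) * eulerSeries a =
      (padeNum G a : R⟦X⟧) + PowerSeries.X ^ (G.natDegree + k) *
        PowerSeries.mk fun n => padeRem G a (k + n) := by
  have htrunc : (PowerSeries.mk (padeRem G a)).trunc k = 0 := by
    ext n
    rw [PowerSeries.coeff_trunc, PowerSeries.coeff_mk, coeff_zero]
    exact ite_eq_right_iff.mpr fun hn => padeRem_eq_zero hG hn
  have hsplit := PowerSeries.eq_X_pow_mul_shift_add_trunc k (PowerSeries.mk (padeRem G a))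
  simp only [htrunc, Polynomial.coe_zero, add_zero, PowerSeries.coeff_mk, add_comm _ k] at hsplit
  rw [padeDenom_mul_eulerSeries, pow_add, mul_assoc, ← hsplit]

lemma natDegree_padeDenom_le (G : R[X]) : (padeDenom G).natDegree ≤ G.natDegree :=
  natDegree_sum_le_of_forall_le _ _ fun i _ =>
    (natDegree_C_mul_X_pow_le _ _).trans (Nat.sub_le _ i)

lemma natDegree_padeNum_lt {G : R[X]} (hG : 0 < G.natDegree) (a : R) :
    (padeNum G a).natDegree < G.natDegree := by
  suffices h : (padeNum G a).natDegree ≤ G.natDegree - 1 by omega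
  refine natDegree_sum_le_of_forall_le _ _ fun i hi => ?_
  have hi' := Nat.lt_succ_iff.mp (Finset.mem_range.mp hi)
  rcases i with - | i
  · simp
  · have h₁ := natDegree_C_mul_X_pow_le (padeCoeff G (i + 1)) (G.natDegree - (i + 1))
    have h₂ := PowerSeries.natDegree_trunc_lt (eulerSeries a) i
    refine natDegree_mul_le.trans ?_
    omega

lemma eval_one_padeDenom (G : R[X]) :
    (padeDenom G).eval 1 = ∑ i ∈ range (G.natDegree + 1), padeCoeff G i := by
  simp [padeDenom, eval_finsetSum]

lemma eval_one_padeNum (G : R[X]) (a : R) :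
    (padeNum G a).eval 1 =
      ∑ i ∈ range (G.natDegree + 1), padeCoeff G i * ∑ n ∈ range i, (n ! : R) * a ^ n := by
  have htrunc (i : ℕ) :
      ((eulerSeries a).trunc i).eval 1 = ∑ n ∈ range i, (n ! : R) * a ^ n := by
    rw [← eval₂_id, PowerSeries.eval₂_trunc_eq_sum_range]
    simp [coeff_eulerSeries]
  simp [padeNum, eval_finsetSum, htrunc]

lemma coeff_zero_padeDenom {G : R[X]} (hG : G.Monic) : (padeDenom G).coeff 0 = 1 := by
  rw [padeDenom, finsetSum_coeff, Finset.sum_range_succ, Finset.sum_eq_zero]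
  · simp [padeCoeff, hG.coeff_natDegree]
  · intro i hi
    rw [coeff_C_mul_X_pow, if_neg (by have := Finset.mem_range.mp hi; omega)]

end PadeApproximation

section Determinants

open Polynomial
open scoped PowerSeries

lemma natDegree_det_add_sum_le {R ι : Type*} [CommRing R] [Fintype ι] [DecidableEq ι]
    (M : Matrix ι ι R[X]) (c d : ι → ℕ) (h : ∀ i j, (M i j).natDegree + c j ≤ d i) :
    M.det.natDegree + ∑ j, c j ≤ ∑ i, d i := by
  have hterm (σ : Equiv.Perm ι) :
      (∏ j, M (σ j) j).natDegree + ∑ j, c j ≤ ∑ i, d i :=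
    calc (∏ j, M (σ j) j).natDegree + ∑ j, c j
        ≤ ∑ j, ((M (σ j) j).natDegree + c j) := by
          rw [Finset.sum_add_distrib]
          gcongr
          exact natDegree_prod_le _ _
      _ ≤ ∑ j, d (σ j) := Finset.sum_le_sum fun j _ => h (σ j) j
      _ = ∑ i, d i := Equiv.sum_comp σ d
  refine Nat.add_le_of_le_sub ((Nat.le_add_left _ _).trans (hterm 1)) ?_
  rw [Matrix.det_apply]
  exact natDegree_sum_le_of_forall_le _ _ fun σ _ =>
    (natDegree_smul_le _ _).trans (Nat.le_sub_of_add_le (hterm σ))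

lemma det_eq_pow_mul_det_of_column_relation {R : Type*} [CommRing R] {m : ℕ}
    {A B : Matrix (Fin (m + 1)) (Fin (m + 1)) R} (f : Fin m → R) (x : R)
    (h₀ : ∀ r, A r 0 = B r 0)
    (h : ∀ r (j : Fin m), A r j.succ = f j * A r 0 + x * B r j.succ) :
    A.det = x ^ m * B.det := by
  have hscale : (Matrix.of fun r c => (Fin.cons 1 fun _ => x : Fin (m + 1) → R) c * B r c).det =
      x ^ m * B.det := by
    rw [Matrix.det_mul_row, Fin.prod_univ_succ]
    simp
  rw [← hscale, ← Matrix.det_transpose A, ← Matrix.det_transpose (Matrix.of _)]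
  refine Matrix.det_eq_of_forall_row_eq_smul_add_const (Fin.cons 0 f) 0 rfl fun c r => ?_
  refine Fin.cases ?_ (fun j => ?_) c
  · simp [h₀]
  · simp [h, h₀, add_comm]

lemma eq_C_mul_X_pow_of_coe_eq_X_pow_mul {R : Type*} [CommRing R] {p : R[X]} {D : ℕ} {u : R⟦X⟧}
    (hdeg : p.natDegree ≤ D) (hp : (p : R⟦X⟧) = PowerSeries.X ^ D * u) :
    p = C (PowerSeries.constantCoeff u) * X ^ D := by
  ext n
  have hcoeff : p.coeff n = if D ≤ n then PowerSeries.coeff (n - D) u else 0 := by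
    rw [← coeff_coe, hp, PowerSeries.coeff_X_pow_mul']
  rw [coeff_C_mul_X_pow]
  rcases lt_trichotomy n D with hn | rfl | hn
  · rw [hcoeff, if_neg hn.not_ge, if_neg hn.ne]
  · simp [hcoeff]
  · rw [coeff_eq_zero_of_natDegree_lt (hdeg.trans_lt hn), if_neg hn.ne']

end Determinants

section PadeRows

open Polynomial
open scoped PowerSeries

variable {R : Type*} [CommRing R] {m : ℕ}

/-- The approximants `(padeDenom G, padeNum G α₁, …, padeNum G αₘ)` as one vector. -/
noncomputable def padeVec (α : Fin m → R) (G : R[X]) : Fin (m + 1) → R[X] :=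
  Fin.cons (padeDenom G) fun j => padeNum G (α j)

/-- The value at `X = 1` of the approximants attached to `G`, paired with the coefficients `lam` of
a linear form. -/
noncomputable def padeForm (α : Fin m → R) (G : R[X]) (lam : Fin (m + 1) → R) : R :=
  ∑ c, (padeVec α G c).eval 1 * lam c

/-- The multiplicity of the root `α j` in `rowPoly α l r`. -/
def rowExp (l : ℕ) (r : Fin (m + 1)) (j : Fin m) : ℕ := if r = j.succ then l else l + 1

/-- The polynomial `∏ (X - αⱼ) ^ rowExp l r j` whose approximants form row `r` of the Padé
matrix. -/
noncomputable def rowPoly (α : Fin m → R) (l : ℕ) (r : Fin (m + 1)) : R[X] :=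
  ∏ j, (X - C (α j)) ^ rowExp l r j

/-- A lower bound for the multiplicities of the roots of `rowPoly α l r`, which together with the
degree of `rowPoly α l r` adds up to the same number in all rows. -/
def contactOrder (l : ℕ) (r : Fin (m + 1)) : ℕ := if r = 0 then l - 1 else l

lemma rowExp_succ_self (l : ℕ) (j : Fin m) : rowExp l j.succ j = l := if_pos rfl

lemma rowExp_of_ne (l : ℕ) {r : Fin (m + 1)} {j : Fin m} (h : r ≠ j.succ) :
    rowExp l r j = l + 1 := if_neg h

lemma contactOrder_succ (l : ℕ) (j : Fin m) : contactOrder l j.succ = l :=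
  if_neg (Fin.succ_ne_zero j)

lemma le_rowExp (l : ℕ) (r : Fin (m + 1)) (j : Fin m) : l ≤ rowExp l r j := by
  unfold rowExp
  split_ifs <;> omega

lemma rowExp_le (l : ℕ) (r : Fin (m + 1)) (j : Fin m) : rowExp l r j ≤ l + 1 := by
  unfold rowExp
  split_ifs <;> omega

lemma contactOrder_le (l : ℕ) (r : Fin (m + 1)) : contactOrder l r ≤ l := by
  unfold contactOrder
  split_ifs <;> omega

lemma sum_rowExp_le (l : ℕ) (r : Fin (m + 1)) : ∑ j, rowExp l r j ≤ m * (l + 1) :=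
  (Finset.sum_le_sum fun j _ => rowExp_le l r j).trans_eq (by simp)

lemma sum_rowExp_add_contactOrder {l : ℕ} (hl : 1 ≤ l) (r : Fin (m + 1)) :
    ∑ j, rowExp l r j + contactOrder l r + 1 = m * (l + 1) + l := by
  refine Fin.cases ?_ (fun k => ?_) r
  · simp [rowExp, contactOrder, (Fin.succ_ne_zero _).symm]
    omega
  · have hterm (j : Fin m) : rowExp l k.succ j + (if k = j then 1 else 0) = l + 1 := by
      simp only [rowExp, Fin.succ_inj]
      split_ifs <;> rfl
    have hsum := Finset.sum_congr (rfl : (univ : Finset (Fin m)) = univ) fun j _ => hterm j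
    rw [Finset.sum_add_distrib] at hsum
    simp only [Finset.sum_ite_eq, mem_univ, if_true, Finset.sum_const, Finset.card_univ,
      Fintype.card_fin, smul_eq_mul] at hsum
    rw [contactOrder_succ]
    omega

lemma rowPoly_monic (α : Fin m → R) (l : ℕ) (r : Fin (m + 1)) : (rowPoly α l r).Monic :=
  monic_prod_of_monic _ _ fun j _ => (monic_X_sub_C (α j)).pow _

lemma natDegree_rowPoly [Nontrivial R] (α : Fin m → R) (l : ℕ) (r : Fin (m + 1)) :
    (rowPoly α l r).natDegree = ∑ j, rowExp l r j := by
  rw [rowPoly, natDegree_prod_of_monic _ _ fun j _ => (monic_X_sub_C (α j)).pow _]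
  exact Finset.sum_congr rfl fun j _ => by
    rw [(monic_X_sub_C (α j)).natDegree_pow, natDegree_X_sub_C, mul_one]

lemma rowPoly_eq_mul (α : Fin m → R) (l : ℕ) (r : Fin (m + 1)) (j : Fin m) :
    rowPoly α l r = (X - C (α j)) ^ rowExp l r j *
      ∏ i ∈ univ.erase j, (X - C (α i)) ^ rowExp l r i :=
  (Finset.mul_prod_erase _ (fun i => (X - C (α i)) ^ rowExp l r i) (mem_univ j)).symm

lemma pow_dvd_rowPoly (α : Fin m → R) {l n : ℕ} {r : Fin (m + 1)} {j : Fin m}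
    (hn : n ≤ rowExp l r j) : (X - C (α j)) ^ n ∣ rowPoly α l r :=
  (pow_dvd_pow _ hn).trans ⟨_, rowPoly_eq_mul α l r j⟩

lemma contactOrder_le_rowExp (l : ℕ) (r : Fin (m + 1)) (j : Fin m) :
    contactOrder l r ≤ rowExp l r j := (contactOrder_le l r).trans (le_rowExp l r j)

lemma padeRem_rowPoly_contactOrder_eq_zero (α : Fin m → R) {l : ℕ} {r : Fin (m + 1)} {j : Fin m}
    (h : r ≠ j.succ) : padeRem (rowPoly α l r) (α j) (contactOrder l r) = 0 :=
  padeRem_eq_zero (pow_dvd_rowPoly α (rowExp_of_ne l h).ge)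
    (Nat.lt_succ_of_le (contactOrder_le l r))

lemma padeRem_rowPoly_succ_ne_zero [IsDomain R] [CharZero R] {α : Fin m → R}
    (hα₀ : ∀ j, α j ≠ 0) (hα : Function.Injective α) (l : ℕ) (j : Fin m) :
    padeRem (rowPoly α l j.succ) (α j) l ≠ 0 := by
  have hfact (n : ℕ) : (n ! : R) ≠ 0 := Nat.cast_ne_zero.mpr (Nat.factorial_ne_zero n)
  have hprod := rowPoly_eq_mul α l j.succ j
  rw [rowExp_succ_self] at hprod
  rw [padeRem_self hprod, eval_prod]
  refine mul_ne_zero (mul_ne_zero (mul_ne_zero (hfact _) (hfact _)) (pow_ne_zero _ (hα₀ j)))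
    (mul_ne_zero (pow_ne_zero _ (hα₀ j)) (Finset.prod_ne_zero_iff.mpr fun i hi => ?_))
  rw [eval_pow, eval_sub, eval_X, eval_C]
  exact pow_ne_zero _ (sub_ne_zero.mpr (hα.ne (Finset.ne_of_mem_erase hi).symm))

/-- The square matrix of all the approximants. -/
noncomputable def padeMatrix (α : Fin m → R) (l : ℕ) : Matrix (Fin (m + 1)) (Fin (m + 1)) R[X] :=
  Matrix.of fun r => padeVec α (rowPoly α l r)

/-- The denominators and the remainders of the approximants, where the power of `X` common to all
remainders is factored out. -/
noncomputable def padeRemMatrix (α : Fin m → R) (l : ℕ) :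
    Matrix (Fin (m + 1)) (Fin (m + 1)) R⟦X⟧ :=
  Matrix.of fun r => Fin.cons (padeDenom (rowPoly α l r) : R⟦X⟧) fun j =>
    -PowerSeries.mk fun n => padeRem (rowPoly α l r) (α j) (contactOrder l r + n)

lemma natDegree_padeVec_le (α : Fin m → R) {G : R[X]} (hG : 0 < G.natDegree) (c : Fin (m + 1)) :
    (padeVec α G c).natDegree + (if c = 0 then 0 else 1) ≤ G.natDegree := by
  refine Fin.cases ?_ (fun j => ?_) c
  · simpa [padeVec] using natDegree_padeDenom_le G
  · simpa [padeVec] using natDegree_padeNum_lt hG (α j)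

lemma natDegree_det_padeMatrix_le [Nontrivial R] (α : Fin m → R) (hm : 1 ≤ m) {l : ℕ}
    (hl : 1 ≤ l) : (padeMatrix α l).det.natDegree ≤ m * (m * (l + 1) + l - 1) := by
  have hrow (r : Fin (m + 1)) : (rowPoly α l r).natDegree + contactOrder l r + 1 =
      m * (l + 1) + l := by
    rw [natDegree_rowPoly, sum_rowExp_add_contactOrder hl]
  have hpos : 1 * (1 + 1) ≤ m * (l + 1) := Nat.mul_le_mul hm (by omega)
  have hdet := natDegree_det_add_sum_le (padeMatrix α l) (fun c => if c = 0 then 0 else 1)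
    (fun r => (rowPoly α l r).natDegree) fun r c =>
      natDegree_padeVec_le α (by have := hrow r; have := contactOrder_le l r; omega) c
  have hsum := Finset.sum_congr (rfl : (univ : Finset (Fin (m + 1))) = univ) fun r _ => hrow r
  simp only [Finset.sum_add_distrib, contactOrder,
    Fin.sum_univ_succ (fun r => if r = 0 then _ else _), Fin.succ_ne_zero, if_true, if_false,
    Finset.sum_const, Finset.card_univ, Fintype.card_fin, smul_eq_mul] at hdet hsum
  obtain ⟨k, rfl⟩ := Nat.exists_eq_add_of_le' hl
  rw [Nat.add_sub_cancel] at hsum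
  rw [← add_assoc, Nat.add_sub_cancel]
  linarith

lemma coe_det_padeMatrix (α : Fin m → R) [Nontrivial R] {l : ℕ} (hl : 1 ≤ l) :
    ((padeMatrix α l).det : R⟦X⟧) =
      PowerSeries.X ^ (m * (m * (l + 1) + l - 1)) * (padeRemMatrix α l).det := by
  have hcoe : ((padeMatrix α l).det : R⟦X⟧) =
      (coeToPowerSeries.ringHom.mapMatrix (padeMatrix α l)).det :=
    RingHom.map_det coeToPowerSeries.ringHom (padeMatrix α l)
  rw [hcoe, mul_comm m, pow_mul]
  refine det_eq_pow_mul_det_of_column_relation (fun j => eulerSeries (α j)) _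
    (fun r => rfl) fun r j => ?_
  have hrel := padeDenom_mul_eulerSeries_of_dvd
    (pow_dvd_rowPoly α (contactOrder_le_rowExp l r j))
  have hexp : (rowPoly α l r).natDegree + contactOrder l r = m * (l + 1) + l - 1 := by
    rw [natDegree_rowPoly, ← sum_rowExp_add_contactOrder hl r, Nat.add_sub_cancel]
  rw [hexp] at hrel
  change (padeNum (rowPoly α l r) (α j) : R⟦X⟧) =
    eulerSeries (α j) * (padeDenom (rowPoly α l r) : R⟦X⟧) + _ * -PowerSeries.mk _
  linear_combination -hrel

lemma constantCoeff_det_padeRemMatrix_ne_zero [IsDomain R] [CharZero R] {α : Fin m → R}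
    (hα₀ : ∀ j, α j ≠ 0) (hα : Function.Injective α) (l : ℕ) :
    PowerSeries.constantCoeff (padeRemMatrix α l).det ≠ 0 := by
  have hentry (r : Fin (m + 1)) (j : Fin m) :
      PowerSeries.constantCoeff (padeRemMatrix α l r j.succ) =
        -padeRem (rowPoly α l r) (α j) (contactOrder l r) := by
    simp [padeRemMatrix]
  rw [RingHom.map_det, Matrix.det_of_isLowerTriangular]
  · refine Finset.prod_ne_zero_iff.mpr fun r _ => ?_
    rw [RingHom.mapMatrix_apply, Matrix.map_apply]
    refine Fin.cases ?_ (fun j => ?_) r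
    · have hone : PowerSeries.constantCoeff (padeRemMatrix α l 0 0) = 1 :=
        coeff_zero_padeDenom (rowPoly_monic α l 0)
      rw [hone]
      exact one_ne_zero
    · rw [hentry, contactOrder_succ]
      exact neg_ne_zero.mpr (padeRem_rowPoly_succ_ne_zero hα₀ hα l j)
  · intro r c hrc
    have hrc' : r < c := hrc
    obtain ⟨j, rfl⟩ := Fin.exists_succ_eq.mpr (Fin.ne_zero_of_lt hrc')
    rw [RingHom.mapMatrix_apply, Matrix.map_apply, hentry,
      padeRem_rowPoly_contactOrder_eq_zero α hrc'.ne, neg_zero]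

theorem eval_one_det_padeMatrix_ne_zero [IsDomain R] [CharZero R] {α : Fin m → R}
    (hα₀ : ∀ j, α j ≠ 0) (hα : Function.Injective α) (hm : 1 ≤ m) {l : ℕ} (hl : 1 ≤ l) :
    (padeMatrix α l).det.eval 1 ≠ 0 := by
  rw [eq_C_mul_X_pow_of_coe_eq_X_pow_mul (natDegree_det_padeMatrix_le α hm hl)
    (coe_det_padeMatrix α hl)]
  simpa using constantCoeff_det_padeRemMatrix_ne_zero hα₀ hα l

theorem exists_padeForm_ne_zero [IsDomain R] [CharZero R] {α : Fin m → R}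
    (hα₀ : ∀ j, α j ≠ 0) (hα : Function.Injective α) (hm : 1 ≤ m) {l : ℕ} (hl : 1 ≤ l)
    {lam : Fin (m + 1) → R} (hlam : lam ≠ 0) :
    ∃ r, padeForm α (rowPoly α l r) lam ≠ 0 := by
  by_contra! hzero
  refine hlam (Matrix.eq_zero_of_mulVec_eq_zero
    (M := (evalRingHom 1).mapMatrix (padeMatrix α l)) ?_ (funext hzero))
  rw [← RingHom.map_det]
  exact eval_one_det_padeMatrix_ne_zero hα₀ hα hm hl

end PadeRows

section Majorants

open Polynomial

variable {R : Type*} [CommRing R]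

/-- `P` majorizes `p` with respect to the absolute value `f`. -/
def IsMajorant (f : AbsoluteValue R ℝ) (p : R[X]) (P : ℝ[X]) : Prop :=
  ∀ i, f (p.coeff i) ≤ P.coeff i

variable {f : AbsoluteValue R ℝ} {p q : R[X]} {P Q : ℝ[X]}

lemma IsMajorant.coeff_nonneg (h : IsMajorant f p P) (i : ℕ) : 0 ≤ P.coeff i :=
  (f.nonneg _).trans (h i)

lemma IsMajorant.mul (hp : IsMajorant f p P) (hq : IsMajorant f q Q) :
    IsMajorant f (p * q) (P * Q) := fun i => by
  rw [coeff_mul, coeff_mul]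
  refine (f.sum_le _ _).trans (Finset.sum_le_sum fun x _ => ?_)
  rw [f.map_mul]
  exact mul_le_mul (hp _) (hq _) (f.nonneg _) (hp.coeff_nonneg _)

lemma IsMajorant.sum_coeff_mul_pow_le (h : IsMajorant f p P) {A : ℝ} (hA : 0 ≤ A) (n : ℕ) :
    ∑ i ∈ range n, P.coeff i * A ^ i ≤ P.eval A := by
  rw [eval_eq_sum_range' (lt_max_of_lt_right (Nat.lt_succ_self _) : _ < max n (P.natDegree + 1))]
  exact Finset.sum_le_sum_of_subset_of_nonneg (range_subset_range.mpr (le_max_left _ _))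
    fun i _ _ => mul_nonneg (h.coeff_nonneg i) (pow_nonneg hA i)

/-- The factorial `i!` allowed for `x i` cancels against the weight `E! / i!` in `padeCoeff`. -/
lemma IsMajorant.apply_sum_padeCoeff_mul_le {G : R[X]} (h : IsMajorant f G P) {A : ℝ} (hA : 0 ≤ A)
    {x : ℕ → R} (hx : ∀ i, f (x i) ≤ i ! * A ^ i) :
    f (∑ i ∈ range (G.natDegree + 1), padeCoeff G i * x i) ≤ G.natDegree ! * P.eval A := by
  have hterm (i : ℕ) (hi : i ∈ range (G.natDegree + 1)) :
      f (padeCoeff G i * x i) ≤ G.natDegree ! * (P.coeff i * A ^ i) := by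
    have hweight := Nat.factorial_mul_descFactorial (Nat.sub_le G.natDegree i)
    rw [Nat.sub_sub_self (Nat.lt_succ_iff.mp (Finset.mem_range.mp hi))] at hweight
    calc f (padeCoeff G i * x i)
        = f (G.coeff i) * f (G.natDegree.descFactorial (G.natDegree - i) : ℕ) * f (x i) := by
          rw [padeCoeff, f.map_mul, f.map_mul]
      _ ≤ P.coeff i * (G.natDegree.descFactorial (G.natDegree - i) : ℕ) * (i ! * A ^ i) := by
          gcongr
          · exact mul_nonneg (h.coeff_nonneg i) (Nat.cast_nonneg _)
          · exact h.coeff_nonneg i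
          · exact h i
          · exact f.apply_nat_le_self _
          · exact hx i
      _ = G.natDegree ! * (P.coeff i * A ^ i) := by
          rw [← hweight]
          push_cast
          ring
  calc f (∑ i ∈ range (G.natDegree + 1), padeCoeff G i * x i)
      ≤ ∑ i ∈ range (G.natDegree + 1), G.natDegree ! * (P.coeff i * A ^ i) :=
        (f.sum_le _ _).trans (Finset.sum_le_sum hterm)
    _ ≤ G.natDegree ! * P.eval A := by
        rw [← Finset.mul_sum]
        gcongr
        exact h.sum_coeff_mul_pow_le hA _

lemma sum_range_factorial_le (n : ℕ) : ∑ i ∈ range n, i ! ≤ n ! := by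
  induction n with
  | zero => simp
  | succ n ih =>
    rw [Finset.sum_range_succ]
    rcases Nat.eq_zero_or_pos n with rfl | hn
    · simp
    · rw [Nat.factorial_succ]
      nlinarith

variable [Nontrivial R]

lemma apply_sum_range_factorial_mul_pow_le (f : AbsoluteValue R ℝ) {a : R} {A : ℝ} (hA : 1 ≤ A)
    (ha : f a ≤ A) (i : ℕ) : f (∑ n ∈ range i, (n ! : R) * a ^ n) ≤ i ! * A ^ i :=
  calc f (∑ n ∈ range i, (n ! : R) * a ^ n)
      ≤ ∑ n ∈ range i, (n ! : ℝ) * A ^ i := by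
        refine (f.sum_le _ _).trans (Finset.sum_le_sum fun n hn => ?_)
        rw [f.map_mul, f.map_pow]
        gcongr
        · exact f.apply_nat_le_self _
        · exact (pow_le_pow_left₀ (f.nonneg a) ha n).trans
            (pow_le_pow_right₀ hA (Finset.mem_range.mp hn).le)
    _ ≤ i ! * A ^ i := by
        rw [← Finset.sum_mul]
        gcongr
        exact_mod_cast sum_range_factorial_le i

lemma IsMajorant.apply_eval_one_padeVec_le {m : ℕ} {α : Fin m → R} {G : R[X]}
    (h : IsMajorant f G P) {A : ℝ} (hA : 1 ≤ A) (hα : ∀ j, f (α j) ≤ A) (c : Fin (m + 1)) :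
    f ((padeVec α G c).eval 1) ≤ G.natDegree ! * P.eval A := by
  have hA₀ := zero_le_one.trans hA
  refine Fin.cases ?_ (fun j => ?_) c
  · have hone (i : ℕ) : f 1 ≤ i ! * A ^ i := by
      rw [f.map_one]
      exact one_le_mul_of_one_le_of_one_le (mod_cast Nat.factorial_pos i) (one_le_pow₀ hA)
    simpa [padeVec, eval_one_padeDenom] using h.apply_sum_padeCoeff_mul_le hA₀ hone
  · rw [padeVec, Fin.cons_succ, eval_one_padeNum]
    exact h.apply_sum_padeCoeff_mul_le hA₀ (apply_sum_range_factorial_mul_pow_le f hA (hα j))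

lemma IsMajorant.apply_padeForm_le {m : ℕ} {α : Fin m → R} {G : R[X]} (h : IsMajorant f G P)
    {A Λ : ℝ} (hA : 1 ≤ A) (hα : ∀ j, f (α j) ≤ A) {lam : Fin (m + 1) → R}
    (hlam : ∀ c, f (lam c) ≤ Λ) :
    f (padeForm α G lam) ≤ (m + 1) * G.natDegree ! * (Λ * P.eval A) := by
  have hterm (c : Fin (m + 1)) :
      f ((padeVec α G c).eval 1 * lam c) ≤ G.natDegree ! * P.eval A * Λ := by
    have hvec := h.apply_eval_one_padeVec_le hA hα c
    rw [f.map_mul]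
    exact mul_le_mul hvec (hlam c) (f.nonneg _) ((f.nonneg _).trans hvec)
  refine ((f.sum_le _ _).trans (Finset.sum_le_sum fun c _ => hterm c)).trans_eq ?_
  rw [Finset.sum_const, Finset.card_univ, Fintype.card_fin, nsmul_eq_mul]
  push_cast
  ring

lemma isMajorant_one (f : AbsoluteValue R ℝ) : IsMajorant f 1 1 := fun i => by
  rw [coeff_one, coeff_one]
  split_ifs <;> simp

lemma IsMajorant.pow (h : IsMajorant f p P) (n : ℕ) : IsMajorant f (p ^ n) (P ^ n) := by
  induction n with
  | zero => simpa using isMajorant_one f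
  | succ n ih => simpa only [pow_succ] using ih.mul h

lemma IsMajorant.prod {ι : Type*} {p : ι → R[X]} {P : ι → ℝ[X]}
    (h : ∀ j, IsMajorant f (p j) (P j)) (s : Finset ι) :
    IsMajorant f (∏ j ∈ s, p j) (∏ j ∈ s, P j) := by
  classical
  induction s using Finset.induction_on with
  | empty => simpa using isMajorant_one f
  | insert j s hj ih => simpa only [Finset.prod_insert hj] using (h j).mul ih

lemma isMajorant_X_sub_C (f : AbsoluteValue R ℝ) (a : R) :
    IsMajorant f (X - C a) (X + C (f a)) := fun i => by
  rcases i with - | - | i <;> simp [coeff_X, coeff_C]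

lemma isMajorant_rowPoly {m : ℕ} (f : AbsoluteValue R ℝ) (α : Fin m → R) (l : ℕ)
    (r : Fin (m + 1)) :
    IsMajorant f (rowPoly α l r) (∏ j, (X + C (f (α j))) ^ rowExp l r j) :=
  IsMajorant.prod (fun j => (isMajorant_X_sub_C f (α j)).pow _) _

end Majorants

section ArchimedeanPlaces

variable (K : Type*) [Field K] [NumberField K]

/-- The exponent `κ_w / κ` in the normalised absolute value at `w`. -/
noncomputable def localWeight (w : InfinitePlace K) : ℝ := w.mult / Module.finrank ℚ K

lemma sum_localWeight : ∑ w, localWeight K w = 1 := by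
  unfold localWeight
  rw [← Finset.sum_div, ← Nat.cast_sum, InfinitePlace.sum_mult_eq, div_self]
  exact_mod_cast (Module.finrank_pos (R := ℚ) (M := K)).ne'

lemma prod_rpow_localWeight {x : ℝ} (hx : 0 < x) : ∏ w, x ^ localWeight K w = x := by
  rw [← Real.rpow_sum_of_pos hx, sum_localWeight, Real.rpow_one]

variable {K} (w : InfinitePlace K)

lemma localWeight_pos : 0 < localWeight K w :=
  div_pos (Nat.cast_pos.mpr InfinitePlace.mult_pos) (Nat.cast_pos.mpr Module.finrank_pos)

lemma localWeight_le_one : localWeight K w ≤ 1 :=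
  (Finset.single_le_sum (fun w _ => (localWeight_pos w).le) (Finset.mem_univ w)).trans_eq
    (sum_localWeight K)

lemma infNorm_eq_rpow (x : K) : infNorm K w x = w x ^ localWeight K w := rfl

lemma infNorm_nonneg (x : K) : 0 ≤ infNorm K w x := Real.rpow_nonneg (apply_nonneg w x) _

lemma one_le_prod_infNorm {y : 𝓞 K} (hy : y ≠ 0) : 1 ≤ ∏ w, infNorm K w y := by
  have hnorm : ∏ w, infNorm K w y =
      (∏ w : InfinitePlace K, w (y : K) ^ w.mult) ^ (Module.finrank ℚ K : ℝ)⁻¹ := by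
    rw [← Real.finsetProd_rpow _ _ fun w _ => pow_nonneg (apply_nonneg w _) _]
    refine Finset.prod_congr rfl fun w _ => ?_
    rw [infNorm, div_eq_mul_inv, Real.rpow_mul (apply_nonneg w _), Real.rpow_natCast]
  rw [hnorm, InfinitePlace.prod_eq_abs_norm, ← Algebra.coe_norm_int]
  refine Real.one_le_rpow ?_ (by positivity)
  exact_mod_cast Int.one_le_abs (Algebra.norm_ne_zero_iff.mpr hy)

lemma prod_infNorm_natCast {n : ℕ} (hn : 0 < n) : ∏ w, infNorm K w n = n := by
  have hw (w : InfinitePlace K) : infNorm K w n = (n : ℝ) ^ localWeight K w := by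
    rw [infNorm_eq_rpow, ← InfinitePlace.norm_embedding_eq, map_natCast, Complex.norm_natCast]
  simp only [hw]
  exact prod_rpow_localWeight K (Nat.cast_pos.mpr hn)

variable {m : ℕ}

/-- The paper's `max_j max{1, ‖α_j‖_w}`. -/
noncomputable def archRadius (α : Fin m → 𝓞 K) (w : InfinitePlace K) : ℝ :=
  ⨆ j, max 1 (infNorm K w (α j))

/-- The paper's constant `c₁`. -/
noncomputable def archConst (α : Fin m → 𝓞 K) : ℝ :=
  ∏ w, (archRadius α w ^ m * ∏ i, (infNorm K w (α i) + archRadius α w))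

/-- The quantity `∏_{w ∣ ∞} max_i ‖λ_i‖_w`. -/
noncomputable def archHeight (lam : Fin (m + 1) → 𝓞 K) : ℝ :=
  ∏ w, ⨆ i, infNorm K w (lam i)

lemma archHeight_nonneg (lam : Fin (m + 1) → 𝓞 K) : 0 ≤ archHeight lam :=
  Finset.prod_nonneg fun w _ => Real.iSup_nonneg fun i => infNorm_nonneg w (lam i)

variable (α : Fin m → 𝓞 K)

lemma infNorm_le_archRadius (j : Fin m) : infNorm K w (α j) ≤ archRadius α w :=
  (le_max_right 1 _).trans
    (le_ciSup (f := fun j => max 1 (infNorm K w (α j))) (Set.finite_range _).bddAbove j)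

lemma one_le_archRadius (hm : 1 ≤ m) : 1 ≤ archRadius α w :=
  (le_max_left 1 _).trans
    (le_ciSup (f := fun j => max 1 (infNorm K w (α j))) (Set.finite_range _).bddAbove ⟨0, hm⟩)

lemma one_le_infNorm_add_archRadius (hm : 1 ≤ m) (i : Fin m) :
    1 ≤ infNorm K w (α i) + archRadius α w :=
  (one_le_archRadius w α hm).trans (le_add_of_nonneg_left (infNorm_nonneg w _))

lemma prod_infNorm_add_archRadius_le (hm : 1 ≤ m) :
    ∏ i, (infNorm K w (α i) + archRadius α w) ≤
      archRadius α w ^ m * ∏ i, (infNorm K w (α i) + archRadius α w) :=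
  le_mul_of_one_le_left
    (zero_le_one.trans (Finset.one_le_prod fun i _ => one_le_infNorm_add_archRadius w α hm i))
    (one_le_pow₀ (one_le_archRadius w α hm))

lemma one_le_archConst (hm : 1 ≤ m) : 1 ≤ archConst α :=
  Finset.one_le_prod fun w _ =>
    (Finset.one_le_prod fun i _ => one_le_infNorm_add_archRadius w α hm i).trans
      (prod_infNorm_add_archRadius_le w α hm)

/-- The absolute value of `K` at `w`, restricted to the ring of integers. -/
noncomputable def integerAbs (w : InfinitePlace K) : AbsoluteValue (𝓞 K) ℝ :=
  w.1.comp (f := algebraMap (𝓞 K) K) RingOfIntegers.coe_injective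

lemma infNorm_eq_integerAbs_rpow (x : 𝓞 K) :
    infNorm K w x = integerAbs w x ^ localWeight K w := rfl

lemma integerAbs_le_rpow_inv {x : 𝓞 K} {a : ℝ} (h : infNorm K w x ≤ a) :
    integerAbs w x ≤ a ^ (localWeight K w)⁻¹ :=
  (Real.le_rpow_inv_iff_of_pos ((integerAbs w).nonneg x) ((infNorm_nonneg w x).trans h)
    (localWeight_pos w)).mpr h

lemma integerAbs_add_rpow_inv_archRadius_nonneg (hm : 1 ≤ m) (j : Fin m) :
    0 ≤ integerAbs w (α j) + archRadius α w ^ (localWeight K w)⁻¹ :=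
  add_nonneg ((integerAbs w).nonneg _)
    (Real.rpow_nonneg (zero_le_one.trans (one_le_archRadius w α hm)) _)

lemma prod_integerAbs_add_pow_rpow_le (hm : 1 ≤ m) (e : Fin m → ℕ) :
    (∏ j, (integerAbs w (α j) + archRadius α w ^ (localWeight K w)⁻¹) ^ e j) ^ localWeight K w ≤
      ∏ j, (infNorm K w (α j) + archRadius α w) ^ e j := by
  have hθ := localWeight_pos w
  have hradius := zero_le_one.trans (one_le_archRadius w α hm)
  have hfactor := integerAbs_add_rpow_inv_archRadius_nonneg w α hm
  rw [← Real.finsetProd_rpow _ _ fun j _ => pow_nonneg (hfactor j) _]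
  refine Finset.prod_le_prod (fun j _ => Real.rpow_nonneg (pow_nonneg (hfactor j) _) _)
    fun j _ => ?_
  rw [← Real.rpow_pow_comm (hfactor j)]
  refine pow_le_pow_left₀ (Real.rpow_nonneg (hfactor j) _) ?_ _
  have hadd := Real.rpow_add_le_add_rpow ((integerAbs w).nonneg (α j))
    (Real.rpow_nonneg hradius (localWeight K w)⁻¹) hθ.le (localWeight_le_one w)
  rwa [Real.rpow_inv_rpow hradius hθ.ne', ← infNorm_eq_integerAbs_rpow] at hadd

/-- Both maxima are replaced by their `localWeight`-th roots, so that the estimate can be carried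
out with the unnormalised absolute value. -/
lemma infNorm_padeForm_le (hm : 1 ≤ m) (l : ℕ) (r : Fin (m + 1)) (lam : Fin (m + 1) → 𝓞 K) :
    infNorm K w (padeForm α (rowPoly α l r) lam : 𝓞 K) ≤
      ((m + 1) * (rowPoly α l r).natDegree !) ^ localWeight K w *
        ((⨆ i, infNorm K w (lam i)) *
          ∏ j, (infNorm K w (α j) + archRadius α w) ^ rowExp l r j) := by
  have hθ := localWeight_pos w
  have hsup : 0 ≤ ⨆ i, infNorm K w (lam i) := Real.iSup_nonneg fun i => infNorm_nonneg w _
  have hroot := Real.rpow_nonneg hsup (localWeight K w)⁻¹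
  have hprod : 0 ≤ ∏ j,
      (integerAbs w (α j) + archRadius α w ^ (localWeight K w)⁻¹) ^ rowExp l r j :=
    Finset.prod_nonneg fun j _ =>
      pow_nonneg (integerAbs_add_rpow_inv_archRadius_nonneg w α hm j) _
  have habs := (isMajorant_rowPoly (integerAbs w) α l r).apply_padeForm_le
    (Real.one_le_rpow (one_le_archRadius w α hm) (inv_nonneg.mpr hθ.le))
    (fun j => integerAbs_le_rpow_inv w (infNorm_le_archRadius w α j))
    (fun i => integerAbs_le_rpow_inv w
      (le_ciSup (f := fun i => infNorm K w (lam i)) (Set.finite_range _).bddAbove i))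
  simp only [Polynomial.eval_prod, Polynomial.eval_pow, Polynomial.eval_add, Polynomial.eval_X,
    Polynomial.eval_C, add_comm _ (integerAbs w _)] at habs
  refine (Real.rpow_le_rpow ((integerAbs w).nonneg _) habs hθ.le).trans ?_
  rw [Real.mul_rpow (by positivity) (mul_nonneg hroot hprod), Real.mul_rpow hroot hprod,
    Real.rpow_inv_rpow hsup hθ.ne']
  gcongr
  exact prod_integerAbs_add_pow_rpow_le w α hm (rowExp l r)

lemma prod_infNorm_add_archRadius_pow_le (hm : 1 ≤ m) (l : ℕ) (r : Fin (m + 1)) :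
    ∏ j, (infNorm K w (α j) + archRadius α w) ^ rowExp l r j ≤
      (archRadius α w ^ m * ∏ i, (infNorm K w (α i) + archRadius α w)) ^ (l + 1) := by
  have hone := one_le_infNorm_add_archRadius w α hm
  calc ∏ j, (infNorm K w (α j) + archRadius α w) ^ rowExp l r j
      ≤ ∏ j, (infNorm K w (α j) + archRadius α w) ^ (l + 1) :=
        Finset.prod_le_prod (fun j _ => pow_nonneg (zero_le_one.trans (hone j)) _)
          fun j _ => pow_le_pow_right₀ (hone j) (rowExp_le l r j)
    _ = (∏ j, (infNorm K w (α j) + archRadius α w)) ^ (l + 1) := Finset.prod_pow _ _ _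
    _ ≤ _ := pow_le_pow_left₀ (Finset.prod_nonneg fun j _ => zero_le_one.trans (hone j))
        (prod_infNorm_add_archRadius_le w α hm) _

lemma prod_infNorm_padeForm_le (hm : 1 ≤ m) (l : ℕ) (r : Fin (m + 1))
    (lam : Fin (m + 1) → 𝓞 K) :
    ∏ w, infNorm K w (padeForm α (rowPoly α l r) lam : 𝓞 K) ≤
      (m + 1) * (rowPoly α l r).natDegree ! * (archHeight lam * archConst α ^ (l + 1)) := by
  have hsup (w : InfinitePlace K) : 0 ≤ ⨆ i, infNorm K w (lam i) :=
    Real.iSup_nonneg fun i => infNorm_nonneg w _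
  have hlocal (w : InfinitePlace K) : infNorm K w (padeForm α (rowPoly α l r) lam : 𝓞 K) ≤
      ((m + 1) * (rowPoly α l r).natDegree !) ^ localWeight K w * ((⨆ i, infNorm K w (lam i)) *
        (archRadius α w ^ m * ∏ i, (infNorm K w (α i) + archRadius α w)) ^ (l + 1)) := by
    refine (infNorm_padeForm_le w α hm l r lam).trans ?_
    have hw := hsup w
    gcongr
    exact prod_infNorm_add_archRadius_pow_le w α hm l r
  refine (Finset.prod_le_prod (fun w _ => infNorm_nonneg w _) fun w _ => hlocal w).trans_eq ?_
  rw [Finset.prod_mul_distrib, Finset.prod_mul_distrib, prod_rpow_localWeight K (by positivity),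
    Finset.prod_pow]
  rfl

end ArchimedeanPlaces

section NonarchimedeanPlaces

lemma hasSum_map_padeRem {R S : Type*} [CommRing R] [CommRing S] [TopologicalSpace S]
    [IsTopologicalRing S] (ψ : R →+* S) {a : R} {F : S}
    (hF : HasSum (fun n : ℕ => ψ ((n ! : R) * a ^ n)) F) (G : Polynomial R) :
    HasSum (fun k => ψ (padeRem G a k))
      (ψ ((padeDenom G).eval 1) * F - ψ ((padeNum G a).eval 1)) := by
  have hterm (i : ℕ) : HasSum (fun k => ψ (padeCoeff G i * (((i + k)! : R) * a ^ (i + k))))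
      (ψ (padeCoeff G i) * (F - ∑ n ∈ range i, ψ ((n ! : R) * a ^ n))) := by
    simp only [map_mul ψ (padeCoeff G i), add_comm i]
    exact ((hasSum_nat_add_iff' i).mpr hF).mul_left _
  convert hasSum_sum (s := range (G.natDegree + 1)) fun i _ => hterm i using 1
  · simp only [padeRem, map_sum]
  · simp only [eval_one_padeDenom, eval_one_padeNum, map_sum, map_mul ψ (padeCoeff G _), mul_sub,
      Finset.sum_sub_distrib, Finset.sum_mul]

lemma valued_le_of_hasSum {S Γ₀ ι : Type*} [Ring S] [LinearOrderedCommGroupWithZero Γ₀]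
    [Valued S Γ₀] {f : ι → S} {x y : S} (hf : HasSum f x)
    (hy : ∀ i, Valued.v (f i) ≤ Valued.v y) : Valued.v x ≤ Valued.v y := by
  rw [← Valuation.restrict_le_iff]
  refine (Valued.isClosed_closedBall S (Valued.v.restrict y)).mem_of_tendsto hf
    (Filter.Eventually.of_forall fun t => ?_)
  exact (Valuation.restrict_le_iff _).mpr (Valuation.map_sum_le _ fun i _ => hy i)

lemma intValuation_le_of_dvd {R : Type*} [CommRing R] [IsDedekindDomain R]
    (v : HeightOneSpectrum R) {x y : R} (h : x ∣ y) : v.intValuation y ≤ v.intValuation x := by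
  obtain ⟨z, rfl⟩ := h
  rw [map_mul]
  exact mul_le_of_le_one_right' (v.intValuation_le_one z)

lemma dvd_of_forall_intValuation_le {R : Type*} [CommRing R] [IsDedekindDomain R] {x y : R}
    (hx : x ≠ 0) (h : ∀ v : HeightOneSpectrum R, v.intValuation y ≤ v.intValuation x) :
    x ∣ y := by
  have hx' : algebraMap R (FractionRing R) x ≠ 0 := by simpa using hx
  obtain ⟨z, hz⟩ := HeightOneSpectrum.mem_integers_of_valuation_le_one (FractionRing R)
    (algebraMap R (FractionRing R) y / algebraMap R (FractionRing R) x) fun v => by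
      rw [map_div₀, HeightOneSpectrum.valuation_of_algebraMap,
        HeightOneSpectrum.valuation_of_algebraMap]
      exact div_le_one_of_le₀ (h v) _root_.zero_le
  rw [eq_div_iff hx', ← map_mul] at hz
  exact ⟨z, (IsFractionRing.injective R (FractionRing R) hz).symm.trans (mul_comm z x)⟩

lemma exists_prime_mem_asIdeal {R : Type*} [CommRing R] [IsDedekindDomain R]
    [Algebra.IsIntegral ℤ R] (v : HeightOneSpectrum R) :
    ∃ p : ℕ, p.Prime ∧ (p : R) ∈ v.asIdeal := by
  have : NeZero v.asIdeal := ⟨v.ne_bot⟩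
  exact ⟨_, Nat.absNorm_under_prime v.asIdeal, Int.absNorm_under_mem v.asIdeal⟩

lemma intValuation_natCast_eq_one {R : Type*} [CommRing R] [IsDedekindDomain R]
    (v : HeightOneSpectrum R) {p n : ℕ} (hp : (p : R) ∈ v.asIdeal) (h : p.Coprime n) :
    v.intValuation (n : R) = 1 := by
  rw [HeightOneSpectrum.intValuation_eq_one_iff]
  intro hn
  obtain ⟨a, b, hab⟩ := (Nat.isCoprime_iff_coprime.mpr h).intCast (R := R)
  have hone : (1 : R) ∈ v.asIdeal := by
    rw [← hab]
    exact add_mem (Ideal.mul_mem_left _ _ (by simpa using hp))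
      (Ideal.mul_mem_left _ _ (by simpa using hn))
  exact v.isPrime.ne_top ((Ideal.eq_top_iff_one _).mpr hone)

variable (K : Type*) [Field K] [NumberField K] (v : HeightOneSpectrum (𝓞 K))

lemma valued_algebraMap_integer (x : 𝓞 K) :
    Valued.v (algebraMap (𝓞 K) (v.adicCompletion K) x) = v.intValuation x :=
  (HeightOneSpectrum.adicCompletion.valued_coe K v _).trans
    (HeightOneSpectrum.valuation_of_algebraMap v x)

lemma summable_factorial_mul_pow (a : 𝓞 K) :
    Summable fun n : ℕ => algebraMap (𝓞 K) (v.adicCompletion K) ((n ! : 𝓞 K) * a ^ n) := by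
  apply NonarchimedeanAddGroup.summable_of_tendsto_cofinite_zero
  rw [Nat.cofinite_eq_atTop]
  have hnorm : Valued.v (algebraMap (𝓞 K) (v.adicCompletion K)
      (Ideal.absNorm v.asIdeal : 𝓞 K)) < 1 := by
    rw [valued_algebraMap_integer, HeightOneSpectrum.intValuation_lt_one_iff_mem]
    exact Ideal.absNorm_mem _
  have hpow := Valued.tendsto_zero_pow_of_v_lt_one hnorm
  rw [(Valued.hasBasis_nhds_zero _ _).tendsto_right_iff] at hpow ⊢
  intro γ _
  obtain ⟨k, hk⟩ := (hpow γ trivial).exists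
  filter_upwards [eventually_ge_atTop (Ideal.absNorm v.asIdeal ^ k)] with n hn
  refine lt_of_le_of_lt ?_ hk
  rw [Valuation.restrict_le_iff, ← map_pow, valued_algebraMap_integer, valued_algebraMap_integer]
  have hdvd : (Ideal.absNorm v.asIdeal : 𝓞 K) ^ k ∣ (n ! : 𝓞 K) := by
    exact_mod_cast Nat.cast_dvd_cast
      (Nat.dvd_factorial (pow_pos (zero_lt_one.trans (HeightOneSpectrum.one_lt_absNorm v)) k) hn)
  exact intValuation_le_of_dvd v (hdvd.mul_right _)

lemma hasSum_eulerF (a : 𝓞 K) :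
    HasSum (fun n : ℕ => algebraMap (𝓞 K) (v.adicCompletion K) ((n ! : 𝓞 K) * a ^ n))
      (eulerF K v a) := by
  convert (summable_factorial_mul_pow K v a).hasSum using 1
  refine tsum_congr fun n => ?_
  rw [map_mul, map_pow, map_natCast]
  rfl

variable {m : ℕ} (α : Fin m → 𝓞 K) (lam : Fin (m + 1) → 𝓞 K)

/-- The linear form `λ₀ + λ₁ F_v(α₁) + … + λ_m F_v(α_m)`. -/
noncomputable def eulerForm : v.adicCompletion K :=
  algebraMap K (v.adicCompletion K) (lam 0 : K) +
    ∑ j : Fin m, algebraMap K (v.adicCompletion K) (lam j.succ : K) * eulerF K v (α j)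

lemma algebraMap_padeForm (G : Polynomial (𝓞 K)) :
    algebraMap (𝓞 K) (v.adicCompletion K) (padeForm α G lam) =
      algebraMap (𝓞 K) (v.adicCompletion K) ((padeDenom G).eval 1) * eulerForm K v α lam -
        ∑ j : Fin m, algebraMap (𝓞 K) (v.adicCompletion K) (lam j.succ) *
          (algebraMap (𝓞 K) (v.adicCompletion K) ((padeDenom G).eval 1) * eulerF K v (α j) -
            algebraMap (𝓞 K) (v.adicCompletion K) ((padeNum G (α j)).eval 1)) := by
  have hcoe (c : Fin (m + 1)) : algebraMap K (v.adicCompletion K) (lam c : K) =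
      algebraMap (𝓞 K) (v.adicCompletion K) (lam c) := rfl
  simp only [padeForm, eulerForm, padeVec, Fin.sum_univ_succ, Fin.cons_zero, Fin.cons_succ, map_add,
    map_sum, map_mul, hcoe, mul_add, mul_sub, Finset.mul_sum, Finset.sum_sub_distrib,
    mul_comm (algebraMap (𝓞 K) (v.adicCompletion K) ((padeNum G _).eval 1))]
  ring_nf

lemma intValuation_padeForm_le {G : Polynomial (𝓞 K)} {l : ℕ}
    (hG : ∀ j, (Polynomial.X - Polynomial.C (α j)) ^ l ∣ G)
    (hform : Valued.v (eulerForm K v α lam) ≤ v.intValuation (G.natDegree ! * l ! : ℕ)) :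
    v.intValuation (padeForm α G lam) ≤ v.intValuation (G.natDegree ! * l ! : ℕ) := by
  have hint (x : 𝓞 K) : Valued.v (algebraMap (𝓞 K) (v.adicCompletion K) x) ≤ 1 :=
    (valued_algebraMap_integer K v x).trans_le (v.intValuation_le_one x)
  rw [← valued_algebraMap_integer K] at hform ⊢
  rw [← valued_algebraMap_integer K, algebraMap_padeForm]
  refine (Valuation.map_sub _ _ _).trans (max_le ?_ (Valuation.map_sum_le _ fun j _ => ?_))
  · rw [map_mul]
    exact (mul_le_of_le_one_left' (hint _)).trans hform
  · rw [map_mul]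
    refine (mul_le_of_le_one_left' (hint _)).trans
      (valued_le_of_hasSum (hasSum_map_padeRem _ (hasSum_eulerF K v (α j)) G) fun k => ?_)
    rw [valued_algebraMap_integer, valued_algebraMap_integer]
    exact intValuation_le_of_dvd v (factorial_mul_factorial_dvd_padeRem (hG j) k)

lemma compNorm_le_compNorm_iff {x y : v.adicCompletion K} :
    compNorm K v x ≤ compNorm K v y ↔ Valued.v x ≤ Valued.v y := by
  rw [← (WithZeroMulInt.toNNReal_strictMono (HeightOneSpectrum.one_lt_absNorm_nnreal v)).le_iff_le]
  exact Real.rpow_le_rpow_iff (NNReal.coe_nonneg _) (NNReal.coe_nonneg _)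
    (inv_pos.mpr (Nat.cast_pos.mpr Module.finrank_pos))

lemma absNorm_pow_le_of_natCast {n k : ℕ} (hn : 0 < n)
    (h : v.asIdeal ^ k ∣ Ideal.span {(n : 𝓞 K)}) :
    Ideal.absNorm v.asIdeal ^ k ≤ n ^ Module.finrank ℚ K := by
  have hdvd := Ideal.absNorm_dvd_absNorm_of_le (Ideal.dvd_iff_le.mp h)
  rw [map_pow, Ideal.absNorm_span_natCast, RingOfIntegers.rank] at hdvd
  exact Nat.le_of_dvd (pow_pos hn _) hdvd

lemma one_div_le_compNorm_natCast {n : ℕ} (hn : 0 < n) :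
    1 / (n : ℝ) ≤ compNorm K v (algebraMap (𝓞 K) (v.adicCompletion K) n) := by
  have hκ : 0 < Module.finrank ℚ K := Module.finrank_pos
  have hN : 0 < Ideal.absNorm v.asIdeal :=
    zero_lt_one.trans (HeightOneSpectrum.one_lt_absNorm v)
  obtain ⟨k, hk, hdvd⟩ : ∃ k : ℕ, v.intValuation (n : 𝓞 K) = WithZero.exp (-(k : ℤ)) ∧
      v.asIdeal ^ k ∣ Ideal.span {(n : 𝓞 K)} :=
    ⟨_, v.intValuation_eq_exp_neg_multiplicity (Nat.cast_ne_zero.mpr hn.ne'),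
      pow_multiplicity_dvd _ _⟩
  have hnorm : compNorm K v (algebraMap (𝓞 K) (v.adicCompletion K) n) =
      ((Ideal.absNorm v.asIdeal : ℝ) ^ k)⁻¹ ^ (Module.finrank ℚ K : ℝ)⁻¹ := by
    rw [compNorm, valued_algebraMap_integer, hk,
      WithZeroMulInt.toNNReal_neg_apply _ WithZero.exp_ne_zero]
    change (((Ideal.absNorm v.asIdeal : NNReal) ^ (-(k : ℤ)) : NNReal) : ℝ) ^ _ = _
    rw [zpow_neg, zpow_natCast]
    push_cast
    rfl
  rw [hnorm, Real.le_rpow_inv_iff_of_pos (by positivity) (by positivity) (Nat.cast_pos.mpr hκ),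
    Real.rpow_natCast, one_div, inv_pow]
  exact inv_anti₀ (by positivity) (mod_cast absNorm_pow_le_of_natCast K v hn hdvd)

end NonarchimedeanPlaces

section PrimeSums

/-- The largest divisor of `M` composed of primes at most `n` (for `M ≠ 0`). -/
def smoothPart (n M : ℕ) : ℕ := ∏ p ∈ primesLE n, p ^ M.factorization p

lemma log_smoothPart (n M : ℕ) :
    Real.log (smoothPart n M) = ∑ p ∈ primesLE n, M.factorization p * Real.log p := by
  have hpos (p) (hp : p ∈ primesLE n) : (p : ℝ) ^ M.factorization p ≠ 0 :=
    pow_ne_zero _ (Nat.cast_ne_zero.mpr (Nat.prime_of_mem_primesLE hp).ne_zero)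
  simp only [smoothPart, Nat.cast_prod, Nat.cast_pow, Real.log_prod hpos, Real.log_pow]

lemma exists_eq_mul_smoothPart {M : ℕ} (hM : M ≠ 0) (n : ℕ) :
    ∃ D, M = D * smoothPart n M ∧ ∀ p, p.Prime → p ∣ D → n < p := by
  refine ⟨∏ p ∈ (M.primeFactors ∪ primesLE n) \ primesLE n, p ^ M.factorization p, ?_,
    fun p hp hpD => ?_⟩
  · rw [smoothPart, Finset.prod_sdiff Finset.subset_union_right]
    refine (Nat.prod_factorization_pow_eq_self hM).symm.trans
      (Finsupp.prod_of_support_subset _ ?_ _ fun _ _ => pow_zero _)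
    rw [Nat.support_factorization]
    exact Finset.subset_union_left
  · obtain ⟨q, hq, hpq⟩ := (hp.prime.dvd_finsetProd_iff _).mp hpD
    obtain ⟨hqM, hqn⟩ := Finset.mem_sdiff.mp hq
    have hqM := (Finset.mem_union.mp hqM).resolve_right hqn
    obtain rfl := (Nat.prime_dvd_prime_iff_eq hp (Nat.prime_of_mem_primeFactors hqM)).mp
      (hp.dvd_of_dvd_pow hpq)
    exact not_le.mp fun hle => hqn (Nat.mem_primesLE.mpr ⟨hle, hp⟩)

lemma smoothPart_factorial_self (n : ℕ) : smoothPart n n ! = n ! := by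
  obtain ⟨D, hD, hprime⟩ := exists_eq_mul_smoothPart n.factorial_ne_zero n
  have hD1 : D = 1 := Nat.eq_one_iff_not_exists_prime_dvd.mpr fun p hp hpD =>
    (hprime p hp hpD).not_ge (hp.dvd_factorial.mp (hpD.trans ⟨_, hD⟩))
  rw [hD1, one_mul] at hD
  exact hD.symm

lemma factorization_factorial_le {p : ℕ} (hp : p.Prime) (n : ℕ) :
    ((n !).factorization p : ℝ) ≤ n / (p - 1) := by
  have hp1 : (1 : ℝ) < p := mod_cast hp.one_lt
  have h : (p - 1) * (n !).factorization p ≤ n :=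
    (Nat.sub_one_mul_factorization_factorial hp).trans_le (Nat.sub_le _ _)
  rw [le_div_iff₀' (sub_pos.mpr hp1)]
  rw [← Nat.cast_pred hp.pos]
  exact_mod_cast h

lemma log_smoothPart_factorial_mul_factorial_le (n N l : ℕ) :
    Real.log (smoothPart n (N ! * l !)) ≤
      (N + l) * ∑ p ∈ primesLE n, Real.log p / (p - 1) := by
  rw [log_smoothPart, Finset.mul_sum]
  refine Finset.sum_le_sum fun p hp => ?_
  have hN := factorization_factorial_le (Nat.prime_of_mem_primesLE hp) N
  have hl := factorization_factorial_le (Nat.prime_of_mem_primesLE hp) l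
  rw [Nat.factorization_mul N.factorial_ne_zero l.factorial_ne_zero, Finsupp.add_apply,
    Nat.cast_add, ← mul_comm_div, add_div]
  exact mul_le_mul_of_nonneg_right (add_le_add hN hl) (Real.log_natCast_nonneg p)

lemma log_add_one_sub_log_le {n : ℕ} (hn : 0 < n) :
    Real.log (n + 1 : ℝ) - Real.log n ≤ 1 / n := by
  have : (0 : ℝ) < n := Nat.cast_pos.mpr hn
  rw [← Real.log_div (by positivity) (by positivity)]
  exact (Real.log_le_sub_one_of_pos (by positivity)).trans_eq (by field_simp; ring)

lemma log_factorial_le {n : ℕ} (hn : 1 ≤ n) :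
    Real.log (n ! : ℕ) ≤ (n + 1) * Real.log n - n + 1 := by
  induction n, hn using Nat.le_induction with
  | base => simp
  | succ n hn ih =>
    have : (0 : ℝ) < n := Nat.cast_pos.mpr hn
    have hlog : 1 ≤ ((n : ℝ) + 1) * (Real.log (n + 1) - Real.log n) := by
      have h := Real.one_sub_inv_le_log_of_pos (show 0 < ((n : ℝ) + 1) / n by positivity)
      rw [Real.log_div (by positivity) (by positivity)] at h
      refine le_trans (le_of_eq ?_) (mul_le_mul_of_nonneg_left h (by positivity))
      field_simp
      ring
    rw [Nat.factorial_succ, Nat.cast_mul, Real.log_mul (by positivity) (by positivity)]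
    push_cast
    linarith

lemma add_one_div_le_factorization_factorial_add_one {p : ℕ} (hp : p.Prime) (n : ℕ) :
    ((n : ℝ) + 1) / p ≤ (n !).factorization p + 1 := by
  have hdvd : (p * (n / p))! ∣ n ! := Nat.factorial_dvd_factorial (Nat.mul_div_le n p)
  have hle : n / p ≤ (n !).factorization p :=
    calc n / p ≤ (p * (n / p))!.factorization p :=
          (Nat.factorization_factorial_mul hp).symm ▸ Nat.le_add_left _ _
      _ ≤ (n !).factorization p := (Nat.factorization_le_iff_dvd (Nat.factorial_ne_zero _)
          n.factorial_ne_zero).mpr hdvd p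
  rw [div_le_iff₀' (Nat.cast_pos.mpr hp.pos)]
  exact_mod_cast (Nat.lt_mul_div_succ n hp.pos).trans_le (Nat.mul_le_mul_left p (by omega))

lemma sum_log_div_le {n : ℕ} (hn : 10 ≤ n) :
    ∑ p ∈ primesLE n, Real.log p / p ≤ Real.log n + 0.45 := by
  have hn' : (10 : ℝ) ≤ n := mod_cast hn
  have hsum : (n + 1) * ∑ p ∈ primesLE n, Real.log p / p - Chebyshev.theta n ≤
      Real.log (n ! : ℕ) := by
    rw [← smoothPart_factorial_self, log_smoothPart, Chebyshev.theta_eq_sum_primesLE_log,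
      Finset.mul_sum, ← Finset.sum_sub_distrib]
    refine Finset.sum_le_sum fun p hp => ?_
    have hle := mul_le_mul_of_nonneg_right
      (add_one_div_le_factorization_factorial_add_one (Nat.prime_of_mem_primesLE hp) n)
      (Real.log_natCast_nonneg p)
    linear_combination hle
  have htheta := Chebyshev.theta_le_log4_mul_x (x := n) (by positivity)
  have hfact := log_factorial_le (n := n) (by omega)
  by_contra! hlt
  nlinarith [mul_lt_mul_of_pos_left hlt (by positivity : (0 : ℝ) < n + 1), Real.log_four_eq,
    Real.log_two_lt_d9]

lemma sum_log_div_mul_sub_one_succ_le (n : ℕ) :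
    ∑ p ∈ primesLE (n + 1), Real.log p / (p * (p - 1)) ≤
      ∑ p ∈ primesLE n, Real.log p / (p * (p - 1)) + Real.log (n + 1) / ((n + 1) * n) := by
  have hterm : 0 ≤ Real.log (n + 1 : ℝ) / ((n + 1) * n) :=
    div_nonneg (Real.log_nonneg (le_add_of_nonneg_left n.cast_nonneg)) (by positivity)
  rw [Nat.primesLE_succ]
  split_ifs
  · rw [Finset.sum_insert (Nat.notMem_primesLE n), add_comm]
    push_cast
    rw [add_sub_cancel_right]
  · exact le_add_of_nonneg_right hterm

lemma sum_log_div_mul_sub_one_le {n : ℕ} (hn : 4 ≤ n) :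
    ∑ p ∈ primesLE n, Real.log p / (p * (p - 1)) ≤ 1.2 - (1.25 + Real.log n) / n := by
  induction n, hn using Nat.le_induction with
  | base =>
    have hprimes : primesLE 4 = {2, 3} := by decide
    rw [hprimes, Finset.sum_pair (by norm_num)]
    norm_num
    linarith [Real.log_two_lt_d9, Real.log_three_lt_d9, Real.log_four_eq]
  | succ n hn ih =>
    have hn' : (4 : ℝ) ≤ n := mod_cast hn
    have hstep : Real.log (n + 1) / ((n + 1) * n) ≤
        (1.25 + Real.log n) / n - (1.25 + Real.log (n + 1)) / (n + 1) := by
      rw [div_sub_div _ _ (by positivity) (by positivity), mul_comm ((n : ℝ) + 1) n]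
      refine div_le_div_of_nonneg_right ?_ (by positivity)
      have hlog := mul_le_mul_of_nonneg_left (log_add_one_sub_log_le (n := n) (by omega))
        (by positivity : (0 : ℝ) ≤ n + 1)
      have hquot : ((n : ℝ) + 1) * (1 / n) ≤ 1.25 := by
        rw [mul_one_div, div_le_iff₀ (by positivity)]
        linarith
      linarith
    push_cast
    linarith [sum_log_div_mul_sub_one_succ_le n]

lemma sum_log_div_sub_one_le {n : ℕ} (hn : 10 ≤ n) :
    ∑ p ∈ primesLE n, Real.log p / (p - 1) ≤ Real.log n + 1.65 := by
  have hsplit : ∑ p ∈ primesLE n, Real.log p / (p - 1) =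
      ∑ p ∈ primesLE n, Real.log p / p + ∑ p ∈ primesLE n, Real.log p / (p * (p - 1)) := by
    rw [← Finset.sum_add_distrib]
    refine Finset.sum_congr rfl fun p hp => ?_
    have hp1 : (1 : ℝ) < p := mod_cast Nat.one_lt_of_mem_primesLE hp
    have hp0 : (p : ℝ) - 1 ≠ 0 := (sub_pos.mpr hp1).ne'
    field_simp
    ring
  have htail : 0 ≤ (1.25 + Real.log n) / n :=
    div_nonneg (add_nonneg (by norm_num) (Real.log_natCast_nonneg n)) n.cast_nonneg
  rw [hsplit]
  linarith [sum_log_div_le hn, sum_log_div_mul_sub_one_le (n := n) (by omega)]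

end PrimeSums

section LocalLowerBound

lemma natCast_dvd_of_forall_prime_dvd {R : Type*} [CommRing R] [IsDedekindDomain R] [CharZero R]
    [Algebra.IsIntegral ℤ R] {D : ℕ} (hD : D ≠ 0) {x : R}
    (h : ∀ p : ℕ, p.Prime → p ∣ D → ∀ v : HeightOneSpectrum R, (p : R) ∈ v.asIdeal →
      v.intValuation x ≤ v.intValuation (D : R)) : (D : R) ∣ x := by
  refine dvd_of_forall_intValuation_le (Nat.cast_ne_zero.mpr hD) fun v => ?_
  obtain ⟨p, hp, hpv⟩ := exists_prime_mem_asIdeal v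
  by_cases hpD : p ∣ D
  · exact h p hp hpD v hpv
  · rw [intValuation_natCast_eq_one v hpv ((hp.coprime_iff_not_dvd).mpr hpD)]
    exact v.intValuation_le_one x

variable {K : Type*} [Field K] [NumberField K]

lemma infNorm_mul (w : InfinitePlace K) (x y : K) :
    infNorm K w (x * y) = infNorm K w x * infNorm K w y := by
  rw [infNorm_eq_rpow, map_mul, Real.mul_rpow (apply_nonneg w x) (apply_nonneg w y)]
  rfl

lemma natCast_le_prod_infNorm_of_dvd {D : ℕ} (hD : 0 < D) {x : 𝓞 K} (hx : x ≠ 0)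
    (h : (D : 𝓞 K) ∣ x) : (D : ℝ) ≤ ∏ w, infNorm K w x := by
  obtain ⟨y, rfl⟩ := h
  simp only [map_mul, map_natCast, infNorm_mul, Finset.prod_mul_distrib, prod_infNorm_natCast hD]
  exact le_mul_of_one_le_right D.cast_nonneg (one_le_prod_infNorm (right_ne_zero_of_mul hx))

variable {m : ℕ} {α : Fin m → 𝓞 K} {lam : Fin (m + 1) → 𝓞 K} {H : ℝ}

lemma log_factorial_le_of_dvd_padeForm (hm : 1 ≤ m) (hheight : archHeight lam ≤ H) {l : ℕ}
    {r : Fin (m + 1)} (hne : padeForm α (rowPoly α l r) lam ≠ 0) {D S : ℕ}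
    (hDS : (rowPoly α l r).natDegree ! * l ! = D * S)
    (hdvd : (D : 𝓞 K) ∣ padeForm α (rowPoly α l r) lam) :
    Real.log (l ! : ℕ) ≤
      Real.log (m + 1) + Real.log H + (l + 1) * Real.log (archConst α) + Real.log S := by
  set E := (rowPoly α l r).natDegree
  have hDS0 : 0 < D * S := hDS ▸ mul_pos E.factorial_pos l.factorial_pos
  have hD : 0 < D := pos_of_mul_pos_left hDS0 S.zero_le
  have hS : (0 : ℝ) < S := Nat.cast_pos.mpr (pos_of_mul_pos_right hDS0 D.zero_le)
  have hc : 0 < archConst α := zero_lt_one.trans_le (one_le_archConst α hm)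
  have hE : (0 : ℝ) < E ! := Nat.cast_pos.mpr E.factorial_pos
  have hl : (0 : ℝ) < l ! := Nat.cast_pos.mpr l.factorial_pos
  have hDle : (D : ℝ) ≤ (m + 1) * E ! * (H * archConst α ^ (l + 1)) :=
    (natCast_le_prod_infNorm_of_dvd hD hne hdvd).trans
      ((prod_infNorm_padeForm_le α hm l r lam).trans (by gcongr))
  have hle : (l ! : ℝ) ≤ (m + 1) * H * archConst α ^ (l + 1) * S := by
    refine le_of_mul_le_mul_left ?_ hE
    calc (E ! : ℝ) * l ! = D * S := mod_cast hDS
      _ ≤ (m + 1) * E ! * (H * archConst α ^ (l + 1)) * S := by gcongr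
      _ = E ! * ((m + 1) * H * archConst α ^ (l + 1) * S) := by ring
  have hH : 0 < H := by
    by_contra! hH
    have : H * ((m + 1) * archConst α ^ (l + 1) * S) ≤ 0 :=
      mul_nonpos_of_nonpos_of_nonneg hH (by positivity)
    linarith
  calc Real.log (l ! : ℕ) ≤ Real.log ((m + 1) * H * archConst α ^ (l + 1) * S) :=
        Real.log_le_log hl hle
    _ = _ := by
        rw [Real.log_mul (by positivity) hS.ne', Real.log_mul (by positivity) (by positivity),
          Real.log_mul (by positivity) hH.ne', Real.log_pow]
        push_cast
        rfl

lemma exists_prime_one_div_lt_compNorm_eulerForm (hm : 1 ≤ m) (hα₀ : ∀ j, α j ≠ 0)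
    (hα : Function.Injective α) (hlam : lam ≠ 0) (hheight : archHeight lam ≤ H) {l : ℕ}
    (hl : 1 ≤ l) {n : ℕ}
    (hlarge : Real.log (m + 1) + Real.log H + (l + 1) * Real.log (archConst α) +
      (m * (l + 1) + l) * ∑ p ∈ primesLE n, Real.log p / (p - 1) < Real.log (l ! : ℕ)) :
    ∃ p : ℕ, p.Prime ∧ n < p ∧ p ≤ m * (l + 1) ∧
      ∃ v : HeightOneSpectrum (𝓞 K), (p : 𝓞 K) ∈ v.asIdeal ∧
        1 / (((m * (l + 1))! * l ! : ℕ) : ℝ) < compNorm K v (eulerForm K v α lam) := by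
  obtain ⟨r, hr⟩ := exists_padeForm_ne_zero hα₀ hα hm hl hlam
  set G := rowPoly α l r
  have hdeg : G.natDegree ≤ m * (l + 1) := (natDegree_rowPoly α l r).trans_le (sum_rowExp_le l r)
  have hM : 0 < G.natDegree ! * l ! := mul_pos (Nat.factorial_pos _) l.factorial_pos
  obtain ⟨D, hD, hDprime⟩ := exists_eq_mul_smoothPart hM.ne' n
  have hD0 : D ≠ 0 := left_ne_zero_of_mul (hD ▸ hM.ne')
  by_contra! hsmall
  have hdvd : (D : 𝓞 K) ∣ padeForm α G lam := by
    refine natCast_dvd_of_forall_prime_dvd hD0 fun p hp hpD v hpv => ?_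
    have hpM : p ≤ m * (l + 1) := by
      rcases hp.dvd_mul.mp (hpD.trans ⟨_, hD⟩) with h | h
      · exact (hp.dvd_factorial.mp h).trans hdeg
      · nlinarith [hp.dvd_factorial.mp h]
    have hcomp : compNorm K v (eulerForm K v α lam) ≤
        compNorm K v (algebraMap (𝓞 K) (v.adicCompletion K) (G.natDegree ! * l ! : ℕ)) := by
      refine (hsmall p hp (hDprime p hp hpD) hpM v hpv).trans
        (le_trans ?_ (one_div_le_compNorm_natCast K v hM))
      exact one_div_le_one_div_of_le (Nat.cast_pos.mpr hM) (Nat.cast_le.mpr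
        (Nat.mul_le_mul_right _ (Nat.factorial_le hdeg)))
    rw [compNorm_le_compNorm_iff, valued_algebraMap_integer] at hcomp
    exact (intValuation_padeForm_le K v α lam
      (fun j => pow_dvd_rowPoly α (le_rowExp l r j)) hcomp).trans
        (intValuation_le_of_dvd v (Nat.cast_dvd_cast ⟨_, hD⟩))
  have hlog := log_factorial_le_of_dvd_padeForm hm hheight hr hD hdvd
  have hsmooth := log_smoothPart_factorial_mul_factorial_le n G.natDegree l
  have hweight : (G.natDegree + l : ℝ) * ∑ p ∈ primesLE n, Real.log p / (p - 1) ≤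
      (m * (l + 1) + l) * ∑ p ∈ primesLE n, Real.log p / (p - 1) := by
    refine mul_le_mul_of_nonneg_right (add_le_add_left (mod_cast hdeg) _) ?_
    refine Finset.sum_nonneg fun p hp => div_nonneg (Real.log_natCast_nonneg p) ?_
    exact sub_nonneg.mpr (mod_cast (Nat.one_lt_of_mem_primesLE hp).le)
  linarith

end LocalLowerBound

section ParameterChoice

lemma log_le_div_add_log_sub_one {x a : ℝ} (hx : 0 < x) (ha : 0 < a) :
    Real.log x ≤ x / a + Real.log a - 1 := by
  have h := Real.log_le_sub_one_of_pos (div_pos hx ha)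
  rw [Real.log_div hx.ne' ha.ne'] at h
  linarith

lemma log_le_mul_self {y : ℝ} (hy : 19 ≤ y) : Real.log y ≤ 0.16 * y := by
  have hlog16 : Real.log 16 < 2.7726 := by
    rw [show (16 : ℝ) = 2 ^ 4 by norm_num, Real.log_pow]
    linarith [Real.log_two_lt_d9]
  linarith [log_le_div_add_log_sub_one (by positivity : 0 < y) (by norm_num : (0 : ℝ) < 16)]

lemma lt_log_of_sixteen_le {y : ℝ} (hy : 16 ≤ y) : 2.77 < Real.log y := by
  have hlog := Real.log_le_log (by norm_num) hy
  rw [show (16 : ℝ) = 2 ^ 4 by norm_num, Real.log_pow, Nat.cast_ofNat] at hlog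
  linarith [Real.log_two_gt_d9]

lemma log_le_sqrt_div_three_add {y : ℝ} (hy : 0 < y) : Real.log y ≤ √y / 3 + 1.5836 := by
  have h := log_le_div_add_log_sub_one (Real.sqrt_pos.mpr hy) (by norm_num : (0 : ℝ) < 2 * 3)
  rw [Real.log_sqrt hy.le, Real.log_mul (by norm_num) (by norm_num)] at h
  linarith [Real.log_two_lt_d9, Real.log_three_lt_d9]

lemma le_of_add_three_sq_le {m : ℕ} (hm : 1 ≤ m) {y : ℝ}
    (hy : (m + 3 : ℝ) ^ 2 + 3.77 ≤ y) : 19.77 ≤ y := by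
  have hm' : (1 : ℝ) ≤ m := mod_cast hm
  nlinarith

variable {m : ℕ} {T : ℝ}

lemma mul_log_le {y : ℝ} (hy : (m + 3 : ℝ) ^ 2 + 3.77 ≤ y) : m * Real.log y ≤ 0.39 * y := by
  have hy0 : 0 < y := lt_of_lt_of_le (by positivity) hy
  have hsq := Real.sq_sqrt hy0.le
  have hmz : m + 3 ≤ √y := Real.le_sqrt_of_sq_le (by linarith)
  calc m * Real.log y ≤ m * (√y / 3 + 1.5836) :=
        mul_le_mul_of_nonneg_left (log_le_sqrt_div_three_add hy0) m.cast_nonneg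
    _ ≤ (√y - 3) * (√y / 3 + 1.5836) :=
        mul_le_mul_of_nonneg_right (by linarith) (by positivity)
    _ ≤ 0.39 * y := by nlinarith [sq_nonneg (√y - 5)]

lemma add_three_mul_log_le (hm : 1 ≤ m) {y : ℝ} (hy : (m + 3 : ℝ) ^ 2 + 3.77 ≤ y) :
    (m + 3) * Real.log y + 1.65 * m + 2.65 ≤ 0.85 * y := by
  have hm' : (1 : ℝ) ≤ m := mod_cast hm
  have hy0 : 0 < y := lt_of_lt_of_le (by positivity) hy
  have hsq := Real.sq_sqrt hy0.le
  have hmul := mul_le_mul_of_nonneg_left (log_le_sqrt_div_three_add hy0)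
    (by positivity : (0 : ℝ) ≤ m + 3)
  nlinarith [sq_nonneg (m + 3 - √y), sq_nonneg (m - 1 : ℝ)]

-- With `y = log T` and `u = log y`, the subtracted term collects what each unit of `l` loses:
-- `u` to `log l ≥ y - u`, `1` to Stirling, `u` to `log c₁`, and `(m + 1) (u + 1.65)` to the small
-- primes. It is at most `0.85 y`, so the surplus `40 m u / y` of `padeDegree` regains `6 m u`.
lemma add_one_lt_one_add_mul_sub (hm : 1 ≤ m) {y : ℝ} (hy : (m + 3 : ℝ) ^ 2 + 3.77 ≤ y) :
    y + 1 < (1 + 40 * m * Real.log y / y) *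
      (y - ((m + 3) * Real.log y + 1.65 * m + 2.65)) := by
  have hm' : (1 : ℝ) ≤ m := mod_cast hm
  have hy0 := le_of_add_three_sq_le hm hy
  have hlog := lt_log_of_sixteen_le (by linarith : 16 ≤ y)
  have hloss := add_three_mul_log_le hm hy
  set u := Real.log y
  have hmu : 2.77 * m ≤ m * u := by nlinarith
  have hmu' : u ≤ m * u := le_mul_of_one_le_left (by linarith) hm'
  have hgain : 0.15 * y * (40 * m * u / y) ≤
      (y - ((m + 3) * u + 1.65 * m + 2.65)) * (40 * m * u / y) :=
    mul_le_mul_of_nonneg_right (by linarith) (by positivity)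
  have hcancel : 0.15 * y * (40 * m * u / y) = 6 * (m * u) := by
    field_simp
    ring
  linarith

lemma sq_log_le_div_log (hT : 0 < T) (hY : 19 ≤ Real.log T) :
    Real.log T ^ 2 ≤ T / Real.log T := by
  have hexp := Real.pow_div_factorial_le_exp (x := Real.log T) (by linarith) 5
  rw [Real.exp_log hT] at hexp
  have hsq : (19 : ℝ) ^ 2 ≤ Real.log T ^ 2 := pow_le_pow_left₀ (by norm_num) hY 2
  rw [le_div_iff₀ (by linarith)]
  calc Real.log T ^ 2 * Real.log T ≤ Real.log T ^ 2 * Real.log T * (Real.log T ^ 2 / 120) :=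
        le_mul_of_one_le_right (by positivity) (by linarith)
    _ = Real.log T ^ 5 / 5 ! := by norm_num [Nat.factorial]; ring
    _ ≤ T := hexp

lemma log_factorial_le_mul_log (n : ℕ) : Real.log (n ! : ℕ) ≤ n * Real.log n := by
  rw [← Real.log_pow]
  exact Real.log_le_log (Nat.cast_pos.mpr n.factorial_pos) (mod_cast n.factorial_le_pow)

lemma mul_log_sub_le_log_factorial (n : ℕ) : n * Real.log n - n ≤ Real.log (n ! : ℕ) := by
  obtain rfl | hn := eq_or_ne n 0
  · simp
  have hlog := Real.log_natCast_nonneg n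
  have hpi : 0 ≤ Real.log (2 * Real.pi) := Real.log_nonneg (by linarith [Real.pi_gt_three])
  linarith [Stirling.le_log_factorial_stirling hn]

lemma log_div_log (hT : 0 < T) (hY : 19 ≤ Real.log T) :
    Real.log (T / Real.log T) = Real.log T - Real.log (Real.log T) :=
  Real.log_div hT.ne' (by positivity)

/-- The parameter `l` of the Padé approximations, as a function of `T = log H`: the least
integer that is at least `(1 + 40 m log log T / log T) · T / log T`. -/
noncomputable def padeDegree (m : ℕ) (T : ℝ) : ℕ :=
  ⌈(1 + 40 * m * Real.log (Real.log T) / Real.log T) * (T / Real.log T)⌉₊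

lemma div_log_le_padeDegree (hT : 0 < T) (hY : 19 ≤ Real.log T) :
    T / Real.log T ≤ padeDegree m T := by
  have hlog : 0 ≤ Real.log (Real.log T) := Real.log_nonneg (by linarith)
  exact (le_mul_of_one_le_left (by positivity)
    (le_add_of_nonneg_right (by positivity))).trans (Nat.le_ceil _)

lemma padeDegree_lt_add_one (hT : 0 < T) (hY : 19 ≤ Real.log T) :
    padeDegree m T <
      (1 + 40 * m * Real.log (Real.log T) / Real.log T) * (T / Real.log T) + 1 := by
  have hlog : 0 ≤ Real.log (Real.log T) := Real.log_nonneg (by linarith)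
  exact Nat.ceil_lt_add_one (by positivity)

lemma padeDegree_add_one_lt (hm : 1 ≤ m) (hT : 0 < T)
    (hY : (m + 3 : ℝ) ^ 2 + 3.77 ≤ Real.log T) :
    (padeDegree m T + 1 : ℝ) < 17 * (T / Real.log T) := by
  have hY19 := le_of_add_three_sq_le hm hY
  have hratio : 40 * m * Real.log (Real.log T) / Real.log T ≤ 15.6 := by
    rw [div_le_iff₀ (by linarith)]
    linarith [mul_log_le hY]
  have hX := sq_log_le_div_log hT (by linarith)
  have hceil := padeDegree_lt_add_one (m := m) hT (by linarith)
  have hmul := mul_le_mul_of_nonneg_right hratio (by positivity : 0 ≤ T / Real.log T)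
  nlinarith

lemma add_div_log_lt_padeDegree_mul (hm : 1 ≤ m) (hT : 0 < T)
    (hY : (m + 3 : ℝ) ^ 2 + 3.77 ≤ Real.log T) :
    T + T / Real.log T < padeDegree m T *
      (Real.log T - ((m + 3) * Real.log (Real.log T) + 1.65 * m + 2.65)) := by
  have hY19 := le_of_add_three_sq_le hm hY
  have hloss := add_three_mul_log_le hm hY
  calc T + T / Real.log T = T / Real.log T * (Real.log T + 1) := by
        rw [mul_add, mul_one, div_mul_cancel₀ T (by positivity)]
    _ < T / Real.log T * ((1 + 40 * m * Real.log (Real.log T) / Real.log T) *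
          (Real.log T - ((m + 3) * Real.log (Real.log T) + 1.65 * m + 2.65))) :=
        mul_lt_mul_of_pos_left (add_one_lt_one_add_mul_sub hm hY) (by positivity)
    _ = (1 + 40 * m * Real.log (Real.log T) / Real.log T) * (T / Real.log T) *
          (Real.log T - ((m + 3) * Real.log (Real.log T) + 1.65 * m + 2.65)) := by ring
    _ ≤ _ := mul_le_mul_of_nonneg_right (Nat.le_ceil _) (by linarith)

lemma lt_log_factorial_padeDegree (hm : 1 ≤ m) (hT : 0 < T)
    (hY : (m + 3 : ℝ) ^ 2 + 3.77 ≤ Real.log T) :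
    Real.log (m + 1) + T + (padeDegree m T + 1) * Real.log (Real.log T) +
      (m * (padeDegree m T + 1) + padeDegree m T) * (Real.log (Real.log T) + 1.65) <
        Real.log ((padeDegree m T)! : ℕ) := by
  have hm' : (1 : ℝ) ≤ m := mod_cast hm
  have hY19 := le_of_add_three_sq_le hm hY
  have hX0 : 0 < T / Real.log T := by positivity
  have hXl := div_log_le_padeDegree (m := m) hT (by linarith)
  have hmain := add_div_log_lt_padeDegree_mul hm hT hY
  have hfact := mul_log_sub_le_log_factorial (padeDegree m T)
  have hrest : Real.log (m + 1) + Real.log (Real.log T) + m * (Real.log (Real.log T) + 1.65) ≤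
      T / Real.log T := by
    have hlogm := Real.log_le_sub_one_of_pos (by positivity : (0 : ℝ) < m + 1)
    have hlogY := log_le_mul_self (by linarith : 19 ≤ Real.log T)
    nlinarith [sq_log_le_div_log hT (by linarith), mul_log_le hY]
  have hlogl : padeDegree m T * (Real.log T - Real.log (Real.log T)) ≤
      padeDegree m T * Real.log (padeDegree m T) :=
    mul_le_mul_of_nonneg_left
      (log_div_log hT (by linarith) ▸ Real.log_le_log hX0 hXl) (hX0.le.trans hXl)
  linarith

lemma log_padeDegree_add_one_le (hm : 1 ≤ m) (hT : 0 < T)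
    (hY : (m + 3 : ℝ) ^ 2 + 3.77 ≤ Real.log T) :
    Real.log (padeDegree m T + 1) ≤ Real.log T := by
  have hY19 := le_of_add_three_sq_le hm hY
  refine Real.log_le_log (by positivity) ((padeDegree_add_one_lt hm hT hY).le.trans ?_)
  rw [← mul_div_assoc, div_le_iff₀ (by positivity), mul_comm]
  exact mul_le_mul_of_nonneg_left (by linarith) hT.le

lemma log_factorial_add_log_factorial_le {k l : ℕ} (hk : 1 ≤ k) {y : ℝ}
    (hl : Real.log (l + 1) ≤ y) :
    Real.log ((k * (l + 1))! : ℕ) + Real.log (l ! : ℕ) ≤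
      (l + 1) * ((k + 1) * y + k * Real.log k) := by
  have : (0 : ℝ) < k := Nat.cast_pos.mpr hk
  have hkl := log_factorial_le_mul_log (k * (l + 1))
  have hfact : Real.log (l ! : ℕ) ≤ (l + 1) * Real.log (l + 1) := by
    refine (Real.log_le_log (by positivity) (mod_cast Nat.factorial_le l.le_succ)).trans
      (mod_cast log_factorial_le_mul_log (l + 1))
  rw [Nat.cast_mul, Real.log_mul (by positivity) (by positivity)] at hkl
  push_cast at hkl
  have hmul := mul_le_mul_of_nonneg_left hl (by positivity : 0 ≤ ((l : ℝ) + 1) * (k + 1))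
  linarith

lemma log_factorial_padeDegree_le (hm : 1 ≤ m) (hT : 0 < T)
    (hY : (m + 3 : ℝ) ^ 2 + 3.77 ≤ Real.log T) :
    Real.log ((m * (padeDegree m T + 1))! : ℕ) + Real.log ((padeDegree m T)! : ℕ) ≤
      (m + 1) * T + 114 * m ^ 2 * Real.log (Real.log T) / Real.log T * T := by
  have hm' : (1 : ℝ) ≤ m := mod_cast hm
  have hY19 := le_of_add_three_sq_le hm hY
  have hfact := log_factorial_add_log_factorial_le hm (log_padeDegree_add_one_le hm hT hY)
  have hl17 := padeDegree_add_one_lt hm hT hY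
  have hl := padeDegree_lt_add_one (m := m) hT (by linarith)
  have hX2 := sq_log_le_div_log hT (by linarith)
  have hu := lt_log_of_sixteen_le (by linarith : 16 ≤ Real.log T)
  have hlogm : 2 * Real.log m ≤ Real.log (Real.log T) := by
    rw [← Nat.cast_two, ← Real.log_pow]
    exact Real.log_le_log (by positivity) (by nlinarith)
  set l : ℝ := (padeDegree m T : ℝ)
  set X := T / Real.log T with hX
  set Y := Real.log T
  set u := Real.log Y
  have : 0 < X := by positivity
  have hlm : (l + 1) * (m * Real.log m) ≤ 17 * X * (m * (u / 2)) := by gcongr; linarith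
  have hlY : (l + 1) * Y ≤ T + 40 * (m * (u * X)) + 2 * Y := by
    refine (mul_le_mul_of_nonneg_right (by linarith : l + 1 ≤ (1 + 40 * m * u / Y) * X + 2)
      (by linarith)).trans_eq ?_
    rw [hX]
    field_simp
  have hYX : 2 * Y ≤ u * X := by nlinarith
  have hsq : m * (u * X) ≤ m ^ 2 * (u * X) :=
    mul_le_mul_of_nonneg_right (le_self_pow₀ hm' two_ne_zero) (by positivity)
  have hone : u * X ≤ m * (u * X) := le_mul_of_one_le_left (by positivity) hm'
  have hT114 : 114 * m ^ 2 * u / Y * T = 114 * (m ^ 2 * (u * X)) := by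
    rw [hX]
    ring
  have hmul := mul_le_mul_of_nonneg_left hlY (by positivity : (0 : ℝ) ≤ m + 1)
  rw [hT114]
  nlinarith

lemma ten_le_floor_log_div_log (hT : 0 < T) (hY : 19 ≤ Real.log T) :
    10 ≤ ⌊Real.log (T / Real.log T)⌋₊ := by
  refine Nat.le_floor ?_
  rw [log_div_log hT hY]
  push_cast
  linarith [log_le_mul_self hY]

lemma sum_primesLE_floor_le (hT : 0 < T) (hY : 19 ≤ Real.log T) :
    ∑ p ∈ primesLE ⌊Real.log (T / Real.log T)⌋₊, Real.log p / (p - 1) ≤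
      Real.log (Real.log T) + 1.65 := by
  have hn := ten_le_floor_log_div_log hT hY
  have hfloor : (⌊Real.log (T / Real.log T)⌋₊ : ℝ) ≤ Real.log T := by
    refine (Nat.floor_le ?_).trans ?_ <;> rw [log_div_log hT hY]
    · linarith [log_le_mul_self hY]
    · linarith [Real.log_nonneg (by linarith : 1 ≤ Real.log T)]
  refine (sum_log_div_sub_one_le hn).trans (add_le_add_left ?_ _)
  exact Real.log_le_log (Nat.cast_pos.mpr (by omega)) hfloor

lemma add_sum_primesLE_lt_log_factorial_padeDegree (hm : 1 ≤ m) (hT : 0 < T)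
    (hY : (m + 3 : ℝ) ^ 2 + 3.77 ≤ Real.log T) {c : ℝ} (hc : 0 < c) (hcY : c ≤ Real.log T) :
    Real.log (m + 1) + T + (padeDegree m T + 1) * Real.log c +
      (m * (padeDegree m T + 1) + padeDegree m T) *
        ∑ p ∈ primesLE ⌊Real.log (T / Real.log T)⌋₊, Real.log p / (p - 1) <
      Real.log ((padeDegree m T)! : ℕ) := by
  have hY19 := le_of_add_three_sq_le hm hY
  refine lt_of_le_of_lt ?_ (lt_log_factorial_padeDegree hm hT hY)
  gcongr
  exact sum_primesLE_floor_le hT (by linarith)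

lemma add_log_le_log_of_mul_exp_le {s : ℝ} (hs : 0 < s) (h : s * Real.exp s ≤ T) :
    s + Real.log s ≤ Real.log T := by
  have hlog := Real.log_le_log (by positivity) h
  rwa [Real.log_mul hs.ne' (Real.exp_ne_zero s), Real.log_exp, add_comm] at hlog

lemma rpow_le_one_div_factorial_padeDegree {H : ℝ} (hm : 1 ≤ m) (hH : 0 < H)
    (hT : 0 < Real.log H) (hY : (m + 3 : ℝ) ^ 2 + 3.77 ≤ Real.log (Real.log H)) :
    H ^ (-((m : ℝ) + 1) -
        114 * (m : ℝ) ^ 2 * Real.log (Real.log (Real.log H)) / Real.log (Real.log H)) ≤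
      1 / (((m * (padeDegree m (Real.log H) + 1))! * (padeDegree m (Real.log H))! : ℕ) : ℝ) := by
  have hpos : (0 : ℝ) <
      ((m * (padeDegree m (Real.log H) + 1))! * (padeDegree m (Real.log H))! : ℕ) :=
    Nat.cast_pos.mpr (mul_pos (Nat.factorial_pos _) (Nat.factorial_pos _))
  rw [one_div, ← Real.log_le_log_iff (Real.rpow_pos_of_pos hH _) (inv_pos.mpr hpos),
    Real.log_rpow hH, Real.log_inv, Nat.cast_mul,
    Real.log_mul (by positivity) (by positivity)]
  linarith [log_factorial_padeDegree_le hm hT hY]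

end ParameterChoice

theorem euler_linear_form_lower_bound_general {K : Type*} [Field K] [NumberField K]
    {m : ℕ} (hm : 1 ≤ m) {α : Fin m → 𝓞 K} (hα₀ : ∀ j, α j ≠ 0) (hα : Function.Injective α)
    {s : ℝ} (hc : archConst α ≤ s) (hs : (m + 3 : ℝ) ^ 2 + 1 ≤ s)
    {H : ℝ} (hH : s * Real.exp s ≤ Real.log H)
    {lam : Fin (m + 1) → 𝓞 K} (hlam : lam ≠ 0) (hheight : archHeight lam ≤ H) :
    ∃ p : ℕ, p.Prime ∧
      Real.log (Real.log H / Real.log (Real.log H)) < p ∧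
      (p : ℝ) < 17 * m * Real.log H / Real.log (Real.log H) ∧
      ∃ v : HeightOneSpectrum (𝓞 K), (p : 𝓞 K) ∈ v.asIdeal ∧
        H ^ (-((m : ℝ) + 1) -
            114 * (m : ℝ) ^ 2 * Real.log (Real.log (Real.log H)) / Real.log (Real.log H)) <
          compNorm K v (eulerForm K v α lam) := by
  have hm' : (1 : ℝ) ≤ m := mod_cast hm
  have hs16 : 16 ≤ s := by nlinarith
  have hT : 0 < Real.log H := lt_of_lt_of_le (by positivity) hH
  have hsY := add_log_le_log_of_mul_exp_le (by linarith) hH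
  have hlogs := lt_log_of_sixteen_le hs16
  have hY : (m + 3 : ℝ) ^ 2 + 3.77 ≤ Real.log (Real.log H) := by linarith
  have hY19 := le_of_add_three_sq_le hm hY
  have hH0 : 0 < H := ((archHeight_nonneg lam).trans hheight).lt_of_ne'
    fun h => hT.ne' (h ▸ Real.log_zero)
  have hl : 1 ≤ padeDegree m (Real.log H) := Nat.one_le_cast.mp ((one_le_div₀ (by linarith)).mpr
    (Real.log_le_self hT.le) |>.trans (div_log_le_padeDegree hT (by linarith)))
  obtain ⟨p, hp, hnp, hple, v, hpv, hform⟩ :=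
    exists_prime_one_div_lt_compNorm_eulerForm hm hα₀ hα hlam hheight hl
      (add_sum_primesLE_lt_log_factorial_padeDegree hm hT hY
        (zero_lt_one.trans_le (one_le_archConst α hm)) (by linarith))
  refine ⟨p, hp, Nat.lt_of_floor_lt hnp, ?_, v, hpv,
    (rpow_le_one_div_factorial_padeDegree hm hH0 hT hY).trans_lt hform⟩
  calc (p : ℝ) ≤ m * (padeDegree m (Real.log H) + 1) := mod_cast hple
    _ < m * (17 * (Real.log H / Real.log (Real.log H))) :=
      mul_lt_mul_of_pos_left (padeDegree_add_one_lt hm hT hY) (by positivity)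
    _ = 17 * m * Real.log H / Real.log (Real.log H) := by ring

/-- Theorem 2 of the paper: if `log H ≥ s·e^s` with
`s = max{e^κ + 1, c₁ + 1, (m+3)² + 1}` and the coefficients `λ_i ∈ 𝓞 K` (not all zero)
satisfy `∏_{v∈V_∞} max_i ‖λ_i‖_v ≤ H`, then there are a prime
`p ∈ ( log(log H / log log H), 17m·log H / log log H )` and a place `v'` of `K` above `p`
such that `‖λ₀ + λ₁ F_{v'}(α₁) + … + λ_m F_{v'}(α_m)‖_{v'} >
H^(−(m+1) − 114 m²·(log log log H)/(log log H))`. -/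
theorem euler_linear_form_lower_bound (K : Type*) [Field K] [NumberField K]
    {m : ℕ} (hm : 1 ≤ m)
    (α : Fin m → 𝓞 K) (hα0 : ∀ j, α j ≠ 0) (hinj : Function.Injective α)
    (c₁ : ℝ)
    (hc₁ : c₁ = ∏ w : InfinitePlace K,
        ((⨆ j, max 1 (infNorm K w ((α j : K)))) ^ m *
          ∏ i, (infNorm K w ((α i : K)) + ⨆ j, max 1 (infNorm K w ((α j : K))))))
    (s : ℝ)
    (hs : s = max (max (Real.exp (Module.finrank ℚ K) + 1) (c₁ + 1)) (((m : ℝ) + 3) ^ 2 + 1))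
    (H : ℝ) (hH : s * Real.exp s ≤ Real.log H)
    (lam : Fin (m + 1) → 𝓞 K) (hlam : ∃ i, lam i ≠ 0)
    (hheight : ∏ w : InfinitePlace K, ⨆ i, infNorm K w ((lam i : K)) ≤ H) :
    ∃ p : ℕ, p.Prime ∧
      Real.log (Real.log H / Real.log (Real.log H)) < (p : ℝ) ∧
      (p : ℝ) < 17 * m * Real.log H / Real.log (Real.log H) ∧
      ∃ v' : HeightOneSpectrum (𝓞 K), (p : 𝓞 K) ∈ v'.asIdeal ∧
        compNorm K v'
            (algebraMap K (v'.adicCompletion K) ((lam 0 : K)) +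
              ∑ j : Fin m, algebraMap K (v'.adicCompletion K) ((lam j.succ : K)) *
                eulerF K v' (α j)) >
          H ^ (-((m : ℝ) + 1) -
            114 * (m : ℝ) ^ 2 * Real.log (Real.log (Real.log H)) / Real.log (Real.log H)) := by
  subst hc₁ hs
  exact euler_linear_form_lower_bound_general hm hα0 hinj
    ((lt_add_one _).le.trans ((le_max_right _ _).trans (le_max_left _ _))) (le_max_right _ _) hH
    (Function.ne_iff.mpr hlam) hheight
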